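/- arXiv:1908.07361 — 2 statements merged into one kernel-verified Lean document; each statement's English description precedes it below -/
import Mathlib

section
/- Let d be a rational prime, m ≥ 2, n ≥ 1. Suppose the reduction G̅_{d,0,n}(c) ∈ 𝔽_d[c] factors as G̅_{d,0,n} = f_1 ⋯ f_k with f_1, …, f_k ∈ 𝔽_d[c] distinct irreducible polynomials, and let f̃_1, …, f̃_k ∈ ℤ[c] be any lifts. Let c_0 be a root of G_{d,m,n}(c), K = ℚ(c_0), and a_n = f_{c_0,d}^n(0). Then in O_K one has the ideal equality (a_n) = (d, f̃_1(c_0)) ⋯ (d, f̃_k(c_0)). -/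
open Polynomial

noncomputable section

/-- `critPoly d i` is `f_{c,d}^i(0)` as a polynomial in the variable `c` over `ℤ`,
where `f_{c,d}(x) = x^d + c`. -/
def critPoly (d : ℕ) : ℕ → Polynomial ℤ
  | 0 => 0
  | i + 1 => critPoly d i ^ d + X

/-- The field of rational functions in `c` over `ℚ`, realized as the fraction field of `ℤ[c]`. -/
abbrev RF : Type := FractionRing (Polynomial ℤ)

/-- The natural inclusion `ℤ[c] → ℚ(c)`. -/
def toRF (p : Polynomial ℤ) : RF := algebraMap (Polynomial ℤ) RF p

/-- `G_{d,0,n} = ∏_{k ∣ n} (f_{c,d}^k(0))^{μ(n/k)}` as a rational function. -/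
def G0Rat (d n : ℕ) : RF :=
  ∏ k ∈ n.divisors, toRF (critPoly d k) ^ (ArithmeticFunction.moebius (n / k))

/-- `F_{d,m,n}` as a rational function. -/
def FRat (d m n : ℕ) : RF :=
  ∏ k ∈ n.divisors,
    ((toRF (critPoly d (m + k)) - toRF (critPoly d m)) /
      (toRF (critPoly d (m - 1 + k)) - toRF (critPoly d (m - 1)))) ^
      (ArithmeticFunction.moebius (n / k))

/-- `G_{d,m,n}` (for `m ≥ 2`) as a rational function. -/
def GRat (d m n : ℕ) : RF :=
  if n ∣ m - 1 then FRat d m n / FRat d 1 n else FRat d m n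

/-- `G : ℤ[c]` is the Misiurewicz polynomial `G_{d,m,n}` (for `m ≥ 2`). -/
def IsMisiurewicz (d m n : ℕ) (G : Polynomial ℤ) : Prop := toRF G = GRat d m n

/-- `G0 : ℤ[c]` is the polynomial `G_{d,0,n}`. -/
def IsG0 (d n : ℕ) (G0 : Polynomial ℤ) : Prop := toRF G0 = G0Rat d n

/-!
Let `c₀` be a root of `G_{d,m,n}`, choose a valuation `v` of `ℚ(c)` centered at `c₀`, and write
`x` for a point of the critical orbit over `ℤ[c]`. If `x` specializes to a point of exact period
`p`, then `f^{pk}(x) - x` is `f^p(x) - x` times an element specializing to some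
`1 + d x^{d-1} u`, which is nonzero because `c₀` is then an algebraic integer. By Möbius inversion
`∏_{k ∣ n} (f^k(x) - x)^{μ(n/k)}` therefore has trivial value unless `n = p`, and the vanishing of
`G_{d,m,n}` at `c₀` forces `a_m` to have exact period `n` and `a_{m-1+n} ≠ a_{m-1}`.

If `k` properly divides `n`, two distinct points of that cycle are divisible by `a_k` while their
divided difference is a unit; hence `a_k` is a unit, and `a_n` is associated to `G_{d,0,n}(c₀)`.
As `a_{m-1+n}` and `a_{m-1}` are distinct with the same `d`-th power, their divided difference
vanishes; if `n ∤ m-1`, it is `d a_{m-1}^{d-1}` modulo `a_n`, with `a_{m-1}` coprime to `a_n`, and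
if `n ∣ m-1`, it is `a_n^{d-1} (d + a_n z)`, so that `a_n ∣ d` in both cases. Thus
`(a_n) = (d, G_{d,0,n}(c₀))`.

Modulo `d`, the polynomial `G_{d,0,n}` divides `f_c^n(0)`, whose derivative is `1`, so it is
separable; its factors are pairwise coprime and `(d, G_{d,0,n}(c₀))` splits accordingly.
-/

section DividedDifference

variable {R S : Type*} [CommRing R] [CommRing S] (d : ℕ) (x y : R)

/-- The divided difference `(x ^ d - y ^ d) / (x - y)` of the `d`-th power map, written as a sum
so that it also makes sense on the diagonal, where it is the derivative. -/
def dividedDiff : R := ∑ i ∈ Finset.range d, x ^ i * y ^ (d - 1 - i)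

lemma sub_mul_dividedDiff : (x - y) * dividedDiff d x y = x ^ d - y ^ d :=
  (Commute.all x y).mul_geom_sum₂ d

lemma dividedDiff_self : dividedDiff d x x = d * x ^ (d - 1) :=
  geom_sum₂_self x d

lemma map_dividedDiff {F : Type*} [FunLike F R S] [RingHomClass F R S] (φ : F) :
    φ (dividedDiff d x y) = dividedDiff d (φ x) (φ y) := by
  simp only [dividedDiff, map_sum, map_mul, map_pow]

lemma dividedDiff_mul_mul (a : R) :
    dividedDiff d (a * x) (a * y) = a ^ (d - 1) * dividedDiff d x y := by
  rw [dividedDiff, dividedDiff, Finset.mul_sum]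
  refine Finset.sum_congr rfl fun i hi => ?_
  have hsplit : a ^ (d - 1) = a ^ i * a ^ (d - 1 - i) := by
    rw [← pow_add, Nat.add_sub_cancel' (Nat.le_sub_one_of_lt (Finset.mem_range.1 hi))]
  rw [hsplit]
  ring

variable {d x y}

lemma dividedDiff_zero_right (hd : d ≠ 0) : dividedDiff d x 0 = x ^ (d - 1) := by
  rw [dividedDiff, Finset.sum_eq_single_of_mem (d - 1) (Finset.mem_range.2 (by omega))]
  · simp
  · intro i hi hne
    rw [zero_pow (by have := Finset.mem_range.1 hi; omega), mul_zero]

lemma dvd_dividedDiff (hd : 2 ≤ d) {a : R} (hx : a ∣ x) (hy : a ∣ y) : a ∣ dividedDiff d x y := by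
  obtain ⟨x, rfl⟩ := hx
  obtain ⟨y, rfl⟩ := hy
  rw [dividedDiff_mul_mul]
  exact (dvd_pow_self a (by omega)).mul_right _

lemma dvd_dividedDiff_sub_dividedDiff {x' y' t : R} (hx : t ∣ x - x') (hy : t ∣ y - y') :
    t ∣ dividedDiff d x y - dividedDiff d x' y' := by
  simp only [← Ideal.mem_span_singleton, ← Ideal.Quotient.mk_eq_mk_iff_sub_mem] at hx hy ⊢
  rw [map_dividedDiff, map_dividedDiff, hx, hy]

end DividedDifference

section Unicritical

open Function

variable {R S : Type*} [CommRing R] [CommRing S] (d : ℕ) (c : R)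

/-- The unicritical map `f_{c,d} : x ↦ x ^ d + c`. -/
def unicritical : R → R := fun x => x ^ d + c

lemma map_iterate_unicritical {F : Type*} [FunLike F R S] [RingHomClass F R S] (φ : F) (k : ℕ)
    (x : R) : φ ((unicritical d c)^[k] x) = (unicritical d (φ c))^[k] (φ x) :=
  Semiconj.iterate_right (fun y => by simp [unicritical]) k x

lemma unicritical_sub (x y : R) :
    unicritical d c x - unicritical d c y = (x - y) * dividedDiff d x y := by
  simp [unicritical, sub_mul_dividedDiff]

lemma sub_dvd_iterate_unicritical_sub (k : ℕ) (x y : R) :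
    x - y ∣ (unicritical d c)^[k] x - (unicritical d c)^[k] y := by
  induction k with
  | zero => simp
  | succ k ih =>
    simp only [iterate_succ_apply', unicritical_sub]
    exact ih.mul_right _

lemma sub_mul_dividedDiff_dvd_iterate_unicritical_sub {k : ℕ} (hk : 0 < k) (x y : R) :
    (x - y) * dividedDiff d x y ∣ (unicritical d c)^[k] x - (unicritical d c)^[k] y := by
  obtain ⟨k, rfl⟩ := Nat.exists_eq_add_of_le' hk
  rw [iterate_succ_apply, iterate_succ_apply, ← unicritical_sub d c]
  exact sub_dvd_iterate_unicritical_sub d c k _ _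

/- Modulo `f^p(x) - x`, the divided difference of `f` at `f^{pk}(x)` and `x` is the derivative
`d x^{d-1}` of `f` at `x`. -/
lemma exists_iterate_unicritical_mul_sub_self_eq {p k : ℕ} (hp : 0 < p) (hk : 0 < k) (x : R) :
    ∃ u v, (unicritical d c)^[p * k] x - x = ((unicritical d c)^[p] x - x) *
      (1 + d * x ^ (d - 1) * u + ((unicritical d c)^[p] x - x) * v) := by
  induction k, hk using Nat.le_induction with
  | base => exact ⟨0, 0, by simp⟩
  | succ k _ ih =>
    obtain ⟨u, v, huv⟩ := ih
    obtain ⟨w, hw⟩ := sub_mul_dividedDiff_dvd_iterate_unicritical_sub d c hp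
      ((unicritical d c)^[p * k] x) x
    obtain ⟨z, hz⟩ : (unicritical d c)^[p] x - x ∣
        dividedDiff d ((unicritical d c)^[p * k] x) x - dividedDiff d x x :=
      dvd_dividedDiff_sub_dividedDiff ⟨_, huv⟩ (by simp)
    rw [← iterate_add_apply, ← mul_one_add, add_comm 1, huv] at hw
    rw [dividedDiff_self, sub_eq_iff_eq_add] at hz
    rw [hz] at hw
    set δ := (unicritical d c)^[p] x - x with hδ
    refine ⟨(1 + d * x ^ (d - 1) * u + δ * v) * w, (1 + d * x ^ (d - 1) * u + δ * v) * z * w, ?_⟩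
    linear_combination hw - hδ

lemma isUnit_dividedDiff_of_isPeriodicPt [IsDomain R] {n : ℕ} (hn : 0 < n) {x y : R}
    (hx : IsPeriodicPt (unicritical d c) n x) (hy : IsPeriodicPt (unicritical d c) n y)
    (hxy : x ≠ y) : IsUnit (dividedDiff d x y) := by
  have hdvd := sub_mul_dividedDiff_dvd_iterate_unicritical_sub d c hn x y
  rw [hx.eq, hy.eq] at hdvd
  nth_rewrite 2 [← mul_one (x - y)] at hdvd
  exact isUnit_of_dvd_one ((mul_dvd_mul_iff_left (sub_ne_zero.2 hxy)).1 hdvd)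

end Unicritical

section CriticalOrbit

open Function

variable {R S : Type*} [CommRing R] [CommRing S] (d : ℕ) (c : R)

/-- The term `a_n = f_{c,d}^n(0)` of the critical orbit of `x ↦ x ^ d + c`. -/
def critOrbit (n : ℕ) : R := (unicritical d c)^[n] 0

/-- The exact period of the point `a_j` of the critical orbit, with value `0` when `a_j` is not
periodic. -/
def orbitPeriod (j : ℕ) : ℕ := minimalPeriod (unicritical d c) (critOrbit d c j)

lemma critOrbit_zero : critOrbit d c 0 = 0 := rfl

lemma critOrbit_succ (n : ℕ) : critOrbit d c (n + 1) = critOrbit d c n ^ d + c :=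
  iterate_succ_apply' _ _ _

lemma critOrbit_add (i j : ℕ) :
    critOrbit d c (i + j) = (unicritical d c)^[j] (critOrbit d c i) := by
  rw [add_comm, critOrbit, iterate_add_apply, critOrbit]

lemma map_critOrbit {F : Type*} [FunLike F R S] [RingHomClass F R S] (φ : F) (n : ℕ) :
    φ (critOrbit d c n) = critOrbit d (φ c) n := by
  rw [critOrbit, map_iterate_unicritical, map_zero, critOrbit]

lemma critOrbit_succ_sub_critOrbit_succ (i j : ℕ) :
    critOrbit d c (i + 1) - critOrbit d c (j + 1) =
      (critOrbit d c i - critOrbit d c j) * dividedDiff d (critOrbit d c i) (critOrbit d c j) := by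
  rw [sub_mul_dividedDiff, critOrbit_succ, critOrbit_succ, add_sub_add_right_eq_sub]

lemma critOrbit_dvd_critOrbit_add_sub (i j : ℕ) :
    critOrbit d c j ∣ critOrbit d c (i + j) - critOrbit d c i := by
  have hdvd := sub_dvd_iterate_unicritical_sub d c i (critOrbit d c j) 0
  rwa [sub_zero, ← critOrbit_add, add_comm] at hdvd

lemma critOrbit_gcd_mem {I : Ideal R} {i j : ℕ} (hi : critOrbit d c i ∈ I)
    (hj : critOrbit d c j ∈ I) : critOrbit d c (i.gcd j) ∈ I := by
  have mem_iff (k : ℕ) : critOrbit d c k ∈ I ↔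
      IsPeriodicPt (unicritical d (Ideal.Quotient.mk I c)) k 0 := by
    rw [← Ideal.Quotient.eq_zero_iff_mem, map_critOrbit]
    rfl
  rw [mem_iff] at hi hj ⊢
  exact hi.gcd hj

lemma critOrbit_dvd_critOrbit_of_dvd {i j : ℕ} (hij : i ∣ j) :
    critOrbit d c i ∣ critOrbit d c j := by
  obtain ⟨k, rfl⟩ := hij
  induction k with
  | zero => simp [critOrbit_zero]
  | succ k ih => exact (dvd_sub_left ih).1 (critOrbit_dvd_critOrbit_add_sub d c (i * k) i)

lemma orbitPeriod_dvd_iff (j k : ℕ) :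
    orbitPeriod d c j ∣ k ↔ critOrbit d c (j + k) = critOrbit d c j := by
  rw [orbitPeriod, ← isPeriodicPt_iff_minimalPeriod_dvd, critOrbit_add]
  rfl

variable {d c}

lemma isCoprime_critOrbit_of_isUnit_gcd {i j : ℕ} (h : IsUnit (critOrbit d c (i.gcd j))) :
    IsCoprime (critOrbit d c i) (critOrbit d c j) := by
  rw [← Ideal.isCoprime_span_singleton_iff, Ideal.isCoprime_iff_sup_eq, ← Ideal.span_insert]
  exact Ideal.eq_top_of_isUnit_mem _ (critOrbit_gcd_mem d c (Ideal.subset_span (by simp))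
    (Ideal.subset_span (by simp))) h

lemma orbitPeriod_eq_of_le {i j : ℕ} (hij : i ≤ j) (hi : 0 < orbitPeriod d c i) :
    orbitPeriod d c j = orbitPeriod d c i := by
  rw [orbitPeriod, ← Nat.add_sub_cancel' hij, critOrbit_add,
    minimalPeriod_apply_iterate (minimalPeriod_pos_iff_mem_periodicPts.1 hi), ← orbitPeriod]

-- At the critical point `0` the multiplier `d x^{d-1}` vanishes.
lemma exists_critOrbit_mul_eq (hd : 2 ≤ d) {n k : ℕ} (hn : 0 < n) (hk : 0 < k) :
    ∃ u, critOrbit d c (n * k) = critOrbit d c n * (1 + critOrbit d c n * u) := by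
  obtain ⟨u, v, huv⟩ := exists_iterate_unicritical_mul_sub_self_eq d c hn hk 0
  rw [zero_pow (by omega), mul_zero, zero_mul, add_zero, sub_zero, sub_zero] at huv
  exact ⟨v, huv⟩

lemma exists_dividedDiff_critOrbit_mul_eq (hd : 2 ≤ d) {n s : ℕ} (hn : 0 < n) (hs : 0 < s) :
    ∃ z, dividedDiff d (critOrbit d c (n * s + n)) (critOrbit d c (n * s)) =
      critOrbit d c n ^ (d - 1) * (d + critOrbit d c n * z) := by
  obtain ⟨u, hu⟩ := exists_critOrbit_mul_eq (c := c) hd hn hs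
  obtain ⟨v, hv⟩ := exists_critOrbit_mul_eq (c := c) hd hn (Nat.succ_pos s)
  obtain ⟨z, hz⟩ : critOrbit d c n ∣ dividedDiff d (1 + critOrbit d c n * v)
      (1 + critOrbit d c n * u) - dividedDiff d 1 1 :=
    dvd_dividedDiff_sub_dividedDiff (by simp) (by simp)
  rw [dividedDiff_self, one_pow, mul_one, sub_eq_iff_eq_add'] at hz
  exact ⟨z, by rw [← Nat.mul_succ, hv, hu, dividedDiff_mul_mul, hz]⟩

lemma critOrbit_dvd_natCast_of_isUnit_gcd {M n : ℕ} (hunit : IsUnit (critOrbit d c (n.gcd M)))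
    (hzero : dividedDiff d (critOrbit d c (M + n)) (critOrbit d c M) = 0) :
    critOrbit d c n ∣ d := by
  have hdvd : critOrbit d c n ∣ dividedDiff d (critOrbit d c (M + n)) (critOrbit d c M) -
      dividedDiff d (critOrbit d c M) (critOrbit d c M) :=
    dvd_dividedDiff_sub_dividedDiff (critOrbit_dvd_critOrbit_add_sub d c M n) (by simp)
  rw [hzero, dividedDiff_self, zero_sub, dvd_neg] at hdvd
  exact (isCoprime_critOrbit_of_isUnit_gcd hunit).pow_right.dvd_of_dvd_mul_right hdvd

variable [IsDomain R]

-- Two distinct points of the cycle, both divisible by `a_g`, have a unit as divided difference.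
lemma isUnit_critOrbit_of_dvd_orbitPeriod (hd : 2 ≤ d) {m g : ℕ} (hg : g ∣ orbitPeriod d c m)
    (hlt : g < orbitPeriod d c m) : IsUnit (critOrbit d c g) := by
  set n := orbitPeriod d c m
  have hn0 : 0 < n := by omega
  have hg0 : 0 < g := Nat.pos_of_dvd_of_pos hg hn0
  have hperiod (i : ℕ) (hi : m ≤ i) : orbitPeriod d c i = n := orbitPeriod_eq_of_le hi hn0
  have hle : m ≤ n * m := Nat.le_mul_of_pos_left m hn0
  have hper (i : ℕ) (hi : m ≤ i) : IsPeriodicPt (unicritical d c) n (critOrbit d c i) :=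
    hperiod i hi ▸ isPeriodicPt_minimalPeriod _ _
  have hne : critOrbit d c (n * m + g) ≠ critOrbit d c (n * m) := by
    rw [Ne, ← orbitPeriod_dvd_iff, hperiod _ hle]
    exact Nat.not_dvd_of_pos_of_lt hg0 hlt
  exact isUnit_of_dvd_unit (dvd_dividedDiff hd
    (critOrbit_dvd_critOrbit_of_dvd d c ((hg.mul_right m).add dvd_rfl))
    (critOrbit_dvd_critOrbit_of_dvd d c (hg.mul_right m)))
    (isUnit_dividedDiff_of_isPeriodicPt d c hn0 (hper _ (hle.trans (Nat.le_add_right _ _)))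
      (hper _ hle) hne)

lemma critOrbit_dvd_natCast_of_dvd (hd : 2 ≤ d) {M n : ℕ} (hn : 0 < n) (hM : 0 < M) (hnM : n ∣ M)
    (hne : critOrbit d c (M + n) ≠ critOrbit d c M)
    (hzero : dividedDiff d (critOrbit d c (M + n)) (critOrbit d c M) = 0) :
    critOrbit d c n ∣ d := by
  have ha : critOrbit d c n ≠ 0 := by
    intro h
    have hdvd := critOrbit_dvd_critOrbit_add_sub d c M n
    rw [h, zero_dvd_iff, sub_eq_zero] at hdvd
    exact hne hdvd
  obtain ⟨s, rfl⟩ := hnM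
  obtain ⟨z, hz⟩ := exists_dividedDiff_critOrbit_mul_eq (c := c) hd hn (Nat.pos_of_mul_pos_left hM)
  rw [hz] at hzero
  have hsum := (mul_eq_zero.1 hzero).resolve_left (pow_ne_zero _ ha)
  exact ⟨-z, by linear_combination hsum⟩

lemma critOrbit_orbitPeriod_dvd_natCast (hd : 2 ≤ d) {M n : ℕ} (hM : 0 < M) (hn : 0 < n)
    (hperiod : orbitPeriod d c (M + 1) = n) (hne : critOrbit d c (M + n) ≠ critOrbit d c M) :
    critOrbit d c n ∣ d := by
  have hzero : dividedDiff d (critOrbit d c (M + n)) (critOrbit d c M) = 0 := by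
    have hreturn := (orbitPeriod_dvd_iff d c (M + 1) n).1 hperiod.dvd
    rw [add_right_comm, ← sub_eq_zero, critOrbit_succ_sub_critOrbit_succ] at hreturn
    exact (mul_eq_zero.1 hreturn).resolve_left (sub_ne_zero.2 hne)
  by_cases hnM : n ∣ M
  · exact critOrbit_dvd_natCast_of_dvd hd hn hM hnM hne hzero
  · have hlt : n.gcd M < n :=
      (Nat.gcd_le_left M hn).lt_of_ne fun h => hnM (Nat.gcd_eq_left_iff_dvd.1 h)
    exact critOrbit_dvd_natCast_of_isUnit_gcd (isUnit_critOrbit_of_dvd_orbitPeriod hd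
      ((Nat.gcd_dvd_left n M).trans hperiod.symm.dvd) (hlt.trans_eq hperiod.symm)) hzero

end CriticalOrbit

section CriticalOrbitPolynomial

variable {A : Type*} [CommRing A] {d : ℕ}

lemma monic_and_natDegree_critOrbit_X_succ [Nontrivial A] (hd : 2 ≤ d) (k : ℕ) :
    (critOrbit d (X : A[X]) (k + 1)).Monic ∧
      (critOrbit d (X : A[X]) (k + 1)).natDegree = d ^ k := by
  induction k with
  | zero => simp [critOrbit_succ, critOrbit_zero, zero_pow (show d ≠ 0 by omega), monic_X]
  | succ k ih =>
    obtain ⟨hmonic, hdeg⟩ := ih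
    have hpow := hmonic.pow d
    have hpowdeg : (critOrbit d (X : A[X]) (k + 1) ^ d).natDegree = d ^ (k + 1) := by
      rw [hmonic.natDegree_pow, hdeg, pow_succ']
    have hlt : (X : A[X]).natDegree < (critOrbit d (X : A[X]) (k + 1) ^ d).natDegree := by
      rw [natDegree_X, hpowdeg]
      exact Nat.one_lt_pow (by omega) (by omega)
    rw [critOrbit_succ]
    exact ⟨hpow.add_of_left (degree_lt_degree hlt),
      (natDegree_add_eq_left_of_natDegree_lt hlt).trans hpowdeg⟩

lemma monic_critOrbit_X_add_sub [Nontrivial A] (hd : 2 ≤ d) (j : ℕ) {k : ℕ} (hk : 0 < k) :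
    (critOrbit d (X : A[X]) (j + k) - critOrbit d X j).Monic := by
  obtain ⟨k, rfl⟩ := Nat.exists_eq_add_of_le' hk
  obtain ⟨hmonic, hdeg⟩ := monic_and_natDegree_critOrbit_X_succ (A := A) hd (j + k)
  rw [← add_assoc]
  refine hmonic.sub_of_left ?_
  cases j with
  | zero => simpa [critOrbit_zero] using bot_lt_iff_ne_bot.2 (degree_ne_bot.2 hmonic.ne_zero)
  | succ j =>
    refine degree_lt_degree ?_
    rw [hdeg, (monic_and_natDegree_critOrbit_X_succ hd j).2]
    exact Nat.pow_lt_pow_right (by omega) (by omega)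

lemma critOrbit_X_add_sub_ne_zero [Nontrivial A] (hd : 2 ≤ d) (j : ℕ) {k : ℕ} (hk : 0 < k) :
    critOrbit d (X : A[X]) (j + k) - critOrbit d X j ≠ 0 :=
  (monic_critOrbit_X_add_sub hd j hk).ne_zero

lemma critOrbit_X_ne_zero [Nontrivial A] (hd : 2 ≤ d) {k : ℕ} (hk : 0 < k) :
    critOrbit d (X : A[X]) k ≠ 0 := by
  simpa [critOrbit_zero] using critOrbit_X_add_sub_ne_zero (A := A) hd 0 hk

lemma isIntegral_of_orbitPeriod_pos [Nontrivial A] {R : Type*} [CommRing R] [Algebra A R]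
    (hd : 2 ≤ d) {c : R} {j : ℕ} (hj : 0 < orbitPeriod d c j) : IsIntegral A c := by
  refine ⟨_, monic_critOrbit_X_add_sub hd j hj, ?_⟩
  rw [← aeval_def, map_sub, map_critOrbit, map_critOrbit, aeval_X,
    (orbitPeriod_dvd_iff d c j _).1 dvd_rfl, sub_self]

lemma separable_critOrbit_X [CharP A d] {n : ℕ} (hn : 0 < n) :
    (critOrbit d (X : A[X]) n).Separable := by
  obtain ⟨n, rfl⟩ := Nat.exists_eq_add_of_le' hn
  have hderiv : derivative (critOrbit d (X : A[X]) (n + 1)) = 1 := by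
    simp [critOrbit_succ, derivative_pow]
  rw [Polynomial.Separable, hderiv]
  exact isCoprime_one_right

end CriticalOrbitPolynomial

lemma one_add_natCast_mul_ne_zero_of_isIntegral {R : Type*} [CommRing R] [IsDomain R] [CharZero R]
    {d : ℕ} (hd : d ≠ 1) {u : R} (hu : IsIntegral ℤ u) : 1 + d * u ≠ 0 := by
  intro h
  have hinv : (d : R) * -u = 1 := by linear_combination -h
  have hunit : IsUnit (algebraMap ℤ (integralClosure ℤ R) d) :=
    IsUnit.of_mul_eq_one ⟨-u, hu.neg⟩ (Subtype.ext (by simpa using hinv))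
  -- A rational integer that is invertible among the algebraic integers is `± 1`.
  exact hd (by simpa [Int.isUnit_iff] using hunit.of_map)

-- `W` is the divisor product of the function with value `W p` at `p` and `1` elsewhere.
lemma prod_zpow_moebius_of_eq_ite {Γ : Type*} [CommGroupWithZero Γ] {W : ℕ → Γ} {p n : ℕ}
    (hne : ∀ k > 0, W k ≠ 0) (hW : ∀ k > 0, W k = if p ∣ k then W p else 1) (hn : 0 < n) :
    ∏ k ∈ n.divisors, W k ^ ArithmeticFunction.moebius (n / k) = if n = p then W n else 1 := by
  have hprod (k : ℕ) (hk : 0 < k) : ∏ i ∈ k.divisors, (if i = p then W p else 1) = W k := by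
    rw [Finset.prod_ite_eq', hW k hk]
    simp [hk.ne']
  have hsupp (k : ℕ) (hk : 0 < k) : (if k = p then W p else 1) ≠ 0 := by
    split_ifs with h
    · exact hne p (h ▸ hk)
    · exact one_ne_zero
  have hinv := (ArithmeticFunction.prod_eq_iff_prod_pow_moebius_eq_of_nonzero hsupp hne).1
    hprod n hn
  rw [Nat.prod_divisorsAntidiagonal' fun i j => W j ^ ArithmeticFunction.moebius i] at hinv
  rw [hinv]
  split_ifs with h
  · rw [h]
  · rfl

section CenteredValuation

variable {A S Γ F : Type*} [CommRing A] [CommRing S] [LinearOrderedCommGroupWithZero Γ]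
  [FunLike F A S]

/-- The valuation `v` on `A` is *centered at* the homomorphism `π : A → S` if it is at most `1`
everywhere and its maximal ideal pulls back to the kernel of `π`. -/
structure IsCenteredAt (v : Valuation A Γ) (π : F) : Prop where
  le_one (a : A) : v a ≤ 1
  lt_one_iff (a : A) : v a < 1 ↔ π a = 0

lemma IsCenteredAt.eq_one_iff {v : Valuation A Γ} {π : F} (hv : IsCenteredAt v π) (a : A) :
    v a = 1 ↔ π a ≠ 0 := by
  rw [Ne, ← hv.lt_one_iff, not_lt, (hv.le_one a).ge_iff_eq]

end CenteredValuation

section ExistsCenteredValuation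

variable {A F : Type*} [CommRing A] [Field F] [Algebra A F]

lemma isCenteredAt_residue (B : ValuationSubring F) (hB : ∀ a, algebraMap A F a ∈ B) :
    IsCenteredAt (B.valuation.comap (algebraMap A F))
      ((IsLocalRing.residue B).comp ((algebraMap A F).codRestrict B.toSubring hB)) where
  le_one a := (B.valuation_le_one_iff _).2 (hB a)
  lt_one_iff a := by
    rw [RingHom.comp_apply, IsLocalRing.residue_eq_zero_iff]
    exact B.valuation_lt_one_iff ⟨_, hB a⟩ |>.symm

lemma exists_isCenteredAt [FaithfulSMul A F] {S H : Type*} [CommRing S] [IsDomain S]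
    [FunLike H A S] [RingHomClass H A S] (π : H) :
    ∃ B : ValuationSubring F, IsCenteredAt (B.valuation.comap (algebraMap A F)) π := by
  have hker := RingHom.ker_isPrime π
  have hunit (y : (RingHom.ker π).primeCompl) : IsUnit (algebraMap A F y) := by
    rw [isUnit_iff_ne_zero, Ne, FaithfulSMul.algebraMap_eq_zero_iff]
    exact fun hy => y.2 (hy ▸ zero_mem _)
  let φ : Localization.AtPrime (RingHom.ker π) →+* F := IsLocalization.lift hunit
  obtain ⟨B, hB, hlocal⟩ := IsLocalRing.exists_factor_valuationRing φ
  have hφ (a : A) : φ (algebraMap A _ a) = algebraMap A F a := IsLocalization.lift_eq hunit a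
  have hmem (a : A) : algebraMap A F a ∈ B := hφ a ▸ hB _
  refine ⟨B, fun a => (B.valuation_le_one_iff _).2 (hmem a), fun a => ?_⟩
  have hiff : IsUnit (⟨algebraMap A F a, hmem a⟩ : B) ↔ a ∈ (RingHom.ker π).primeCompl := by
    rw [← IsLocalization.AtPrime.isUnit_to_map_iff (Localization.AtPrime (RingHom.ker π)),
      ← isUnit_map_iff (φ.codRestrict B.toSubring hB)]
    exact iff_of_eq (congrArg IsUnit (Subtype.ext (hφ a).symm))
  exact (B.valuation_lt_one_iff ⟨_, hmem a⟩).symm.trans (hiff.not.trans not_not)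

lemma exists_algebraMap_eq_of_forall_valuationSubring [IsFractionRing A F]
    [IsIntegrallyClosed A] {x : F}
    (hx : ∀ B : ValuationSubring F, (∀ a, algebraMap A F a ∈ B) → x ∈ B) :
    ∃ a, algebraMap A F a = x := by
  by_contra! hnot
  have hclosed : IsIntegrallyClosedIn (⊥ : Subalgebra A F).toSubring F :=
    Subring.isIntegrallyClosedIn_iff.2 fun y (hy : IsIntegral (⊥ : Subalgebra A F) y) =>
      Algebra.mem_bot.2 (IsIntegrallyClosed.isIntegral_iff.1 (isIntegral_trans y hy))
  obtain ⟨B, hle, hxB⟩ := Subring.exists_le_valuationSubring_of_isIntegrallyClosedIn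
    (R := (⊥ : Subalgebra A F).toSubring) (x := x) fun hmem =>
      (Algebra.mem_bot.1 hmem).elim hnot
  exact hxB (hx B fun a => hle ((⊥ : Subalgebra A F).algebraMap_mem a))

end ExistsCenteredValuation

section DynatomicValue

open Function

variable {A S Γ : Type*} [CommRing A] [CommRing S] [LinearOrderedCommGroupWithZero Γ]
  (v : Valuation A Γ) (d : ℕ) (c x : A) (n : ℕ)

/-- The value at `v` of the dynatomic product `∏_{k ∣ n} (f^k(x) - x)^{μ(n/k)}` of the map
`f = f_{c,d}`, as a product of values so that no fraction field of `A` is needed. -/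
def dynatomicValue : Γ :=
  ∏ k ∈ n.divisors, v ((unicritical d c)^[k] x - x) ^ ArithmeticFunction.moebius (n / k)

variable {v d c x n} {F : Type*} [FunLike F A S] [RingHomClass F A S] {π : F}

lemma IsCenteredAt.map_iterate_unicritical_sub (hv : IsCenteredAt v π)
    (hx : 0 < minimalPeriod (unicritical d (π c)) (π x) →
      ∀ u, π (1 + d * x ^ (d - 1) * u) ≠ 0) {k : ℕ} (hk : 0 < k) :
    v ((unicritical d c)^[k] x - x) = if minimalPeriod (unicritical d (π c)) (π x) ∣ k then
      v ((unicritical d c)^[minimalPeriod (unicritical d (π c)) (π x)] x - x) else 1 := by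
  have hzero (j : ℕ) : π ((unicritical d c)^[j] x - x) = 0 ↔
      minimalPeriod (unicritical d (π c)) (π x) ∣ j := by
    rw [map_sub, map_iterate_unicritical, sub_eq_zero, ← isPeriodicPt_iff_minimalPeriod_dvd]
    rfl
  split_ifs with hdvd
  · set p := minimalPeriod (unicritical d (π c)) (π x)
    have hp0 : 0 < p := Nat.pos_of_dvd_of_pos hdvd hk
    obtain ⟨s, rfl⟩ := hdvd
    obtain ⟨u, w, huw⟩ := exists_iterate_unicritical_mul_sub_self_eq d c hp0
      (Nat.pos_of_mul_pos_left hk) x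
    have hunit : v (1 + d * x ^ (d - 1) * u + ((unicritical d c)^[p] x - x) * w) = 1 := by
      rw [hv.eq_one_iff, map_add, map_mul _ (_ - _), (hzero p).2 dvd_rfl, zero_mul, add_zero]
      exact hx hp0 u
    rw [huw, map_mul, hunit, mul_one]
  · rwa [hv.eq_one_iff, Ne, hzero]

/- Only the exact period of the reduced point contributes: the displacements of the proper multiples
of that period have the same value, the multiplier being `d x^{d-1}`. -/
lemma IsCenteredAt.dynatomicValue_eq (hv : IsCenteredAt v π)
    (hne : ∀ k > 0, v ((unicritical d c)^[k] x - x) ≠ 0)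
    (hx : 0 < minimalPeriod (unicritical d (π c)) (π x) →
      ∀ u, π (1 + d * x ^ (d - 1) * u) ≠ 0) (hn : 0 < n) :
    dynatomicValue v d c x n = if n = minimalPeriod (unicritical d (π c)) (π x) then
      v ((unicritical d c)^[n] x - x) else 1 :=
  prod_zpow_moebius_of_eq_ite hne (fun _ hk => hv.map_iterate_unicritical_sub hx hk) hn

end DynatomicValue

section GleasonPolynomial

variable {Γ : Type*} [LinearOrderedCommGroupWithZero Γ] {d n : ℕ} {G0 : ℤ[X]}

lemma critPoly_eq_critOrbit (d i : ℕ) : critPoly d i = critOrbit d (X : ℤ[X]) i := by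
  induction i with
  | zero => rfl
  | succ i ih => rw [critPoly, ih, critOrbit_succ]

lemma valuation_critOrbit_X_add_sub_ne_zero (V : Valuation RF Γ) (hd : 2 ≤ d) (j : ℕ) {k : ℕ}
    (hk : 0 < k) :
    V.comap (algebraMap ℤ[X] RF)
      ((unicritical d X)^[k] (critOrbit d X j) - critOrbit d X j) ≠ 0 := by
  rw [← critOrbit_add, Valuation.comap_apply, Valuation.ne_zero_iff, Ne,
    FaithfulSMul.algebraMap_eq_zero_iff]
  exact critOrbit_X_add_sub_ne_zero hd j hk

lemma valuation_G0Rat (V : Valuation RF Γ) :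
    V (G0Rat d n) = dynatomicValue (V.comap (algebraMap ℤ[X] RF)) d X 0 n := by
  simp only [G0Rat, dynatomicValue, map_prod, map_zpow₀, critPoly_eq_critOrbit, toRF, critOrbit,
    sub_zero, Valuation.comap_apply]

lemma IsG0.dvd_critOrbit (hG0 : IsG0 d n G0) (hd : 2 ≤ d) (hn : 0 < n) :
    G0 ∣ critOrbit d X n := by
  have hne : G0Rat d n ≠ 0 := Finset.prod_ne_zero_iff.2 fun k hk => zpow_ne_zero _ <| by
    rw [critPoly_eq_critOrbit, toRF, Ne, FaithfulSMul.algebraMap_eq_zero_iff]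
    exact critOrbit_X_ne_zero hd (Nat.pos_of_mem_divisors hk)
  obtain ⟨q, hq⟩ : ∃ q, algebraMap ℤ[X] RF q =
      algebraMap ℤ[X] RF (critOrbit d X n) / G0Rat d n := by
    refine exists_algebraMap_eq_of_forall_valuationSubring fun B hB => ?_
    have hval := (isCenteredAt_residue B hB).dynatomicValue_eq (c := X) (x := 0)
      (fun k hk => valuation_critOrbit_X_add_sub_ne_zero B.valuation hd 0 hk)
      (fun _ u => by simp [zero_pow (show d - 1 ≠ 0 by omega)]) hn
    rw [← valuation_G0Rat, sub_zero, ← critOrbit, Valuation.comap_apply] at hval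
    rw [← B.valuation_le_one_iff, map_div₀, hval]
    split_ifs
    · exact div_self_le_one _
    · rw [div_one, B.valuation_le_one_iff]
      exact hB _
  refine ⟨q, FaithfulSMul.algebraMap_injective ℤ[X] RF ?_⟩
  rw [map_mul, hq, show algebraMap ℤ[X] RF G0 = G0Rat d n from hG0, mul_div_cancel₀ _ hne]

lemma IsG0.separable_map [Fact d.Prime] (hG0 : IsG0 d n G0) (hn : 0 < n) :
    (G0.map (Int.castRingHom (ZMod d))).Separable := by
  refine (separable_critOrbit_X hn).of_dvd ?_
  rw [← map_X (Int.castRingHom (ZMod d)), ← coe_mapRingHom, ← map_critOrbit]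
  exact _root_.map_dvd _ (hG0.dvd_critOrbit (Fact.out : d.Prime).two_le hn)

lemma prod_zpow_mul_prod_pow_toNat_neg {ι M : Type*} [CommGroupWithZero M] {s : Finset ι}
    {a : ι → M} (ha : ∀ i ∈ s, a i ≠ 0) (e : ι → ℤ) :
    (∏ i ∈ s, a i ^ e i) * ∏ i ∈ s, a i ^ (-e i).toNat = ∏ i ∈ s, a i ^ (e i).toNat := by
  rw [← Finset.prod_mul_distrib]
  refine Finset.prod_congr rfl fun i hi => ?_
  rw [← zpow_natCast, ← zpow_natCast, ← zpow_add₀ (ha i hi)]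
  congr 1
  omega

lemma IsG0.mul_prod_eq (hG0 : IsG0 d n G0) (hd : 2 ≤ d) (hn : 0 < n) :
    G0 * ∏ k ∈ n.properDivisors,
        critOrbit d X k ^ (-ArithmeticFunction.moebius (n / k)).toNat =
      critOrbit d X n * ∏ k ∈ n.properDivisors,
        critOrbit d X k ^ (ArithmeticFunction.moebius (n / k)).toNat := by
  have hne (k : ℕ) (hk : k ∈ n.properDivisors) :
      algebraMap ℤ[X] RF (critOrbit d X k) ≠ 0 := by
    rw [Ne, FaithfulSMul.algebraMap_eq_zero_iff]
    exact critOrbit_X_ne_zero hd (Nat.pos_of_mem_properDivisors hk)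
  have hG0' : algebraMap ℤ[X] RF G0 = algebraMap ℤ[X] RF (critOrbit d X n) *
      ∏ k ∈ n.properDivisors,
        algebraMap ℤ[X] RF (critOrbit d X k) ^ ArithmeticFunction.moebius (n / k) := by
    rw [show algebraMap ℤ[X] RF G0 = G0Rat d n from hG0, G0Rat,
      ← Nat.cons_self_properDivisors hn.ne', Finset.prod_cons, Nat.div_self hn]
    simp [toRF, critPoly_eq_critOrbit]
  apply FaithfulSMul.algebraMap_injective ℤ[X] RF
  simp only [map_mul, map_prod, map_pow]
  rw [hG0', mul_assoc, prod_zpow_mul_prod_pow_toNat_neg hne]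

lemma IsG0.associated_aeval {R : Type*} [CommRing R] {c : R} (hG0 : IsG0 d n G0) (hd : 2 ≤ d)
    (hn : 0 < n) (hunit : ∀ k ∈ n.properDivisors, IsUnit (critOrbit d c k)) :
    Associated (aeval c G0) (critOrbit d c n) := by
  have hprod (e : ℕ → ℕ) : IsUnit (∏ k ∈ n.properDivisors, critOrbit d c k ^ e k) :=
    IsUnit.prod_iff.2 fun k hk => (hunit k hk).pow _
  have heval := congrArg (aeval c) (hG0.mul_prod_eq hd hn)
  simp only [map_mul, map_prod, map_pow, map_critOrbit, aeval_X] at heval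
  refine (associated_mul_unit_right _ _
    (hprod fun k => (-ArithmeticFunction.moebius (n / k)).toNat)).trans ?_
  rw [heval]
  exact associated_mul_unit_left _ _ (hprod _)

end GleasonPolynomial

section MisiurewiczRoot

open Function

variable {R Γ : Type*} [CommRing R] [LinearOrderedCommGroupWithZero Γ] {d n M : ℕ} {c : R}
  {V : Valuation RF Γ}

lemma valuation_FRat (V : Valuation RF Γ) (d M n : ℕ) :
    V (FRat d (M + 1) n) =
      dynatomicValue (V.comap (algebraMap ℤ[X] RF)) d X (critOrbit d X (M + 1)) n /
        dynatomicValue (V.comap (algebraMap ℤ[X] RF)) d X (critOrbit d X M) n := by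
  simp only [FRat, dynatomicValue, map_prod, map_zpow₀, map_div₀, critPoly_eq_critOrbit, toRF,
    ← map_sub, Nat.add_sub_cancel, ← critOrbit_add, div_zpow, Finset.prod_div_distrib,
    Valuation.comap_apply]

lemma valuation_FRat_ne_zero (V : Valuation RF Γ) (hd : 2 ≤ d) (M n : ℕ) :
    V (FRat d (M + 1) n) ≠ 0 := by
  have hne (j : ℕ) :
      dynatomicValue (V.comap (algebraMap ℤ[X] RF)) d X (critOrbit d X j) n ≠ 0 :=
    Finset.prod_ne_zero_iff.2 fun k hk => zpow_ne_zero _ <|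
      valuation_critOrbit_X_add_sub_ne_zero V hd j (Nat.pos_of_mem_divisors hk)
  rw [valuation_FRat]
  exact div_ne_zero (hne _) (hne _)

variable [IsDomain R] [CharZero R]

lemma IsCenteredAt.dynatomicValue_critOrbit
    (hV : IsCenteredAt (V.comap (algebraMap ℤ[X] RF)) (aeval (R := ℤ) c)) (hd : 2 ≤ d)
    (hn : 0 < n) (j : ℕ) :
    dynatomicValue (V.comap (algebraMap ℤ[X] RF)) d X (critOrbit d X j) n =
      if n = orbitPeriod d c j then
        V.comap (algebraMap ℤ[X] RF) (critOrbit d X (j + n) - critOrbit d X j)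
      else 1 := by
  have hperiod : minimalPeriod (unicritical d (aeval (R := ℤ) c X))
      (aeval c (critOrbit d (X : ℤ[X]) j)) = orbitPeriod d c j := by
    rw [map_critOrbit, aeval_X, orbitPeriod]
  rw [hV.dynatomicValue_eq (fun k hk => valuation_critOrbit_X_add_sub_ne_zero V hd j hk) _ hn,
    hperiod, critOrbit_add]
  intro hpos u
  rw [hperiod] at hpos
  rw [mul_assoc, map_add, map_one, map_mul, map_natCast]
  exact one_add_natCast_mul_ne_zero_of_isIntegral (by omega) <| .of_mem_of_fg _
    (isIntegral_of_orbitPeriod_pos hd hpos).fg_adjoin_singleton _ (aeval_mem_adjoin_singleton _ _)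

lemma IsCenteredAt.valuation_FRat_of_orbitPeriod_eq
    (hV : IsCenteredAt (V.comap (algebraMap ℤ[X] RF)) (aeval (R := ℤ) c)) (hd : 2 ≤ d)
    (hn : 0 < n) (hperiod : orbitPeriod d c M = n) :
    V (FRat d (M + 1) n) = V.comap (algebraMap ℤ[X] RF)
      (dividedDiff d (critOrbit d X (M + n)) (critOrbit d X M)) := by
  have hperiod' : orbitPeriod d c (M + 1) = n :=
    (orbitPeriod_eq_of_le M.le_succ (hperiod ▸ hn)).trans hperiod
  rw [valuation_FRat, hV.dynatomicValue_critOrbit hd hn, hV.dynatomicValue_critOrbit hd hn,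
    if_pos hperiod.symm, if_pos hperiod'.symm, add_right_comm, critOrbit_succ_sub_critOrbit_succ,
    map_mul, mul_div_cancel_left₀]
  rw [critOrbit_add]
  exact valuation_critOrbit_X_add_sub_ne_zero V hd M hn

lemma IsCenteredAt.valuation_FRat_of_orbitPeriod_ne
    (hV : IsCenteredAt (V.comap (algebraMap ℤ[X] RF)) (aeval (R := ℤ) c)) (hd : 2 ≤ d)
    (hn : 0 < n) (hperiod : orbitPeriod d c M ≠ n) :
    V (FRat d (M + 1) n) = if n = orbitPeriod d c (M + 1) then
      V.comap (algebraMap ℤ[X] RF) (critOrbit d X (M + 1 + n) - critOrbit d X (M + 1))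
      else 1 := by
  rw [valuation_FRat, hV.dynatomicValue_critOrbit hd hn, hV.dynatomicValue_critOrbit hd hn M,
    if_neg hperiod.symm, div_one]

lemma IsCenteredAt.valuation_FRat_le_one
    (hV : IsCenteredAt (V.comap (algebraMap ℤ[X] RF)) (aeval (R := ℤ) c)) (hd : 2 ≤ d)
    (hn : 0 < n) (M : ℕ) : V (FRat d (M + 1) n) ≤ 1 := by
  by_cases hperiod : orbitPeriod d c M = n
  · rw [hV.valuation_FRat_of_orbitPeriod_eq hd hn hperiod]
    exact hV.le_one _
  · rw [hV.valuation_FRat_of_orbitPeriod_ne hd hn hperiod]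
    split_ifs
    · exact hV.le_one _
    · exact le_rfl

lemma IsCenteredAt.valuation_FRat_of_orbitPeriod_zero_eq
    (hV : IsCenteredAt (V.comap (algebraMap ℤ[X] RF)) (aeval (R := ℤ) c)) (hd : 2 ≤ d)
    (hn : 0 < n) (hperiod : orbitPeriod d c 0 = n) (hnM : n ∣ M) :
    V (FRat d (M + 1) n) = V.comap (algebraMap ℤ[X] RF) (critOrbit d X n) ^ (d - 1) := by
  have hcrit : critOrbit d c n = 0 := by
    simpa [critOrbit_zero] using (orbitPeriod_dvd_iff d c 0 n).1 hperiod.dvd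
  have hperiodM : orbitPeriod d c M = n :=
    (orbitPeriod_eq_of_le M.zero_le (hperiod ▸ hn)).trans hperiod
  rw [hV.valuation_FRat_of_orbitPeriod_eq hd hn hperiodM, ← map_pow]
  obtain ⟨s, rfl⟩ := hnM
  obtain rfl | hs := s.eq_zero_or_pos
  · rw [mul_zero, zero_add, critOrbit_zero, dividedDiff_zero_right (by omega)]
  · obtain ⟨z, hz⟩ := exists_dividedDiff_critOrbit_mul_eq (c := (X : ℤ[X])) hd hn hs
    have hunit : V.comap (algebraMap ℤ[X] RF) ((d : ℤ[X]) + critOrbit d X n * z) = 1 := by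
      rw [hV.eq_one_iff, map_add, map_mul, map_critOrbit, aeval_X, hcrit, zero_mul, add_zero,
        map_natCast, Nat.cast_ne_zero]
      omega
    rw [hz, map_mul, hunit, mul_one]

lemma IsMisiurewicz.valuation_FRat_lt {G : ℤ[X]} (hG : IsMisiurewicz d (M + 1) n G)
    (hroot : aeval c G = 0)
    (hV : IsCenteredAt (V.comap (algebraMap ℤ[X] RF)) (aeval (R := ℤ) c)) (hd : 2 ≤ d)
    (hn : 0 < n) :
    V (FRat d (M + 1) n) < 1 ∧ (n ∣ M → V (FRat d (M + 1) n) < V (FRat d 1 n)) := by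
  have hlt : V (GRat d (M + 1) n) < 1 := by
    rw [← show toRF G = GRat d (M + 1) n from hG]
    exact (hV.lt_one_iff G).2 hroot
  rw [GRat, Nat.add_sub_cancel] at hlt
  split_ifs at hlt with hnM
  · rw [map_div₀, div_lt_one₀ (zero_lt_iff.2 (valuation_FRat_ne_zero V hd 0 n))] at hlt
    exact ⟨hlt.trans_le (hV.valuation_FRat_le_one hd hn 0), fun _ => hlt⟩
  · exact ⟨hlt, fun h => absurd h hnM⟩

lemma IsMisiurewicz.orbitPeriod_eq {G : ℤ[X]} (hG : IsMisiurewicz d (M + 1) n G)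
    (hroot : aeval c G = 0) (hd : 2 ≤ d) (hn : 0 < n) : orbitPeriod d c (M + 1) = n := by
  obtain ⟨B, hV⟩ := exists_isCenteredAt (F := RF) (aeval (R := ℤ) c)
  by_contra hperiod
  have hperiodM : orbitPeriod d c M ≠ n := fun h =>
    hperiod ((orbitPeriod_eq_of_le M.le_succ (h ▸ hn)).trans h)
  have hlt := (hG.valuation_FRat_lt hroot hV hd hn).1
  rw [hV.valuation_FRat_of_orbitPeriod_ne hd hn hperiodM, if_neg (Ne.symm hperiod)] at hlt
  exact hlt.false

lemma IsMisiurewicz.critOrbit_add_ne {G : ℤ[X]} (hG : IsMisiurewicz d (M + 1) n G)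
    (hroot : aeval c G = 0) (hd : 2 ≤ d) (hn : 0 < n) :
    critOrbit d c (M + n) ≠ critOrbit d c M := by
  obtain ⟨B, hV⟩ := exists_isCenteredAt (F := RF) (aeval (R := ℤ) c)
  intro heq
  have hperiod : orbitPeriod d c M = n := by
    rw [← orbitPeriod_eq_of_le M.le_succ
      (Nat.pos_of_dvd_of_pos ((orbitPeriod_dvd_iff d c M n).2 heq) hn)]
    exact hG.orbitPeriod_eq hroot hd hn
  obtain ⟨hlt, hlt'⟩ := hG.valuation_FRat_lt hroot hV hd hn
  have hzero : critOrbit d c M = 0 := by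
    have hderiv := hlt
    rw [hV.valuation_FRat_of_orbitPeriod_eq hd hn hperiod, hV.lt_one_iff, map_dividedDiff,
      map_critOrbit, map_critOrbit, aeval_X, heq, dividedDiff_self] at hderiv
    simpa [show d ≠ 0 by omega, show d - 1 ≠ 0 by omega] using hderiv
  have hperiod0 : orbitPeriod d c 0 = n := by
    rw [← hperiod, orbitPeriod, orbitPeriod, hzero, critOrbit_zero]
  have hnM : n ∣ M := by
    rw [← hperiod0, orbitPeriod_dvd_iff, zero_add, hzero, critOrbit_zero]
  have hlt := hlt' hnM
  rw [hV.valuation_FRat_of_orbitPeriod_zero_eq hd hn hperiod0 hnM,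
    hV.valuation_FRat_of_orbitPeriod_zero_eq hd hn hperiod0 (dvd_zero n)] at hlt
  exact hlt.false

end MisiurewiczRoot

section ReductionIdeals

variable {R : Type*} [CommRing R]

lemma sup_mul_sup_of_isCoprime {I J K : Ideal R} (h : IsCoprime (I ⊔ J) (I ⊔ K)) :
    (I ⊔ J) * (I ⊔ K) = I ⊔ J * K := by
  have hleft : J * K ≤ J := Ideal.mul_le_left
  have hright : J * K ≤ K := Ideal.mul_le_right
  apply le_antisymm
  · have hI : (I ⊔ J) * I ≤ I := Ideal.mul_le_right
    have hI' : I * K ≤ I := Ideal.mul_le_left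
    rw [Ideal.mul_sup, Ideal.sup_mul I J K]
    exact sup_le (le_sup_of_le_left hI) (sup_le_sup_right hI' _)
  · rw [Ideal.mul_eq_inf_of_isCoprime h]
    exact le_inf (sup_le_sup_left hleft I) (sup_le_sup_left hright I)

lemma span_pair_mul_span_pair_of_isCoprime {a x y : R}
    (h : IsCoprime (Ideal.span {a, x}) (Ideal.span {a, y})) :
    Ideal.span {a, x} * Ideal.span {a, y} = Ideal.span {a, x * y} := by
  simp only [Ideal.span_insert a] at h ⊢
  rw [sup_mul_sup_of_isCoprime h, Ideal.span_singleton_mul_span_singleton]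

variable {d : ℕ} {p q : ℤ[X]}

lemma natCast_dvd_aeval_of_map_eq_zero (hp : p.map (Int.castRingHom (ZMod d)) = 0) (c : R) :
    (d : R) ∣ aeval c p := by
  have hdvd : C (d : ℤ) ∣ p := (C_dvd_iff_dvd_coeff _ _).2 fun i => by
    rw [← ZMod.intCast_zmod_eq_zero_iff_dvd, ← eq_intCast (Int.castRingHom (ZMod d)), ← coeff_map,
      hp, coeff_zero]
  simpa using _root_.map_dvd (aeval c) hdvd

lemma span_natCast_aeval_congr
    (hpq : p.map (Int.castRingHom (ZMod d)) = q.map (Int.castRingHom (ZMod d))) (c : R) :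
    Ideal.span {(d : R), aeval c p} = Ideal.span {(d : R), aeval c q} := by
  obtain ⟨r, hr⟩ := natCast_dvd_aeval_of_map_eq_zero (d := d) (p := p - q) (by simp [hpq]) c
  rw [map_sub, sub_eq_iff_eq_add', mul_comm] at hr
  rw [hr, Ideal.span_pair_add_mul_left]

lemma isCoprime_span_natCast_aeval
    (hpq : IsCoprime (p.map (Int.castRingHom (ZMod d))) (q.map (Int.castRingHom (ZMod d))))
    (c : R) : IsCoprime (Ideal.span {(d : R), aeval c p}) (Ideal.span {(d : R), aeval c q}) := by
  have hsurj := Polynomial.map_surjective _ (ZMod.ringHom_surjective (Int.castRingHom (ZMod d)))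
  obtain ⟨a, b, hab⟩ := hpq
  obtain ⟨a, rfl⟩ := hsurj a
  obtain ⟨b, rfl⟩ := hsurj b
  obtain ⟨r, hr⟩ := natCast_dvd_aeval_of_map_eq_zero (d := d) (p := a * p + b * q - 1)
    (by simp [hab]) c
  simp only [map_sub, map_add, map_mul, map_one] at hr
  refine Ideal.isCoprime_iff_exists.2 ⟨_, Ideal.mem_span_pair.2 ⟨-r, aeval c a, rfl⟩,
    _, Ideal.mem_span_pair.2 ⟨0, aeval c b, rfl⟩, ?_⟩
  linear_combination hr

lemma prod_span_natCast_aeval_of_separable {ι : Type*} {s : Finset ι} {p : ι → ℤ[X]}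
    (hsep : (∏ i ∈ s, (p i).map (Int.castRingHom (ZMod d))).Separable) (c : R) :
    ∏ i ∈ s, Ideal.span {(d : R), aeval c (p i)} =
      Ideal.span {(d : R), aeval c (∏ i ∈ s, p i)} := by
  induction s using Finset.cons_induction with
  | empty => simp [Ideal.span_insert]
  | cons i s hi ih =>
    simp only [Finset.prod_cons] at hsep ⊢
    have hcop := hsep.isCoprime
    rw [← Polynomial.map_prod] at hcop
    rw [ih hsep.of_mul_right, map_mul,
      span_pair_mul_span_pair_of_isCoprime (isCoprime_span_natCast_aeval hcop c)]

end ReductionIdeals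

section OrbitIdeal

variable {d m n : ℕ} {G G0 : ℤ[X]} {R : Type*} [CommRing R] [IsDomain R] [CharZero R] {c : R}

lemma IsMisiurewicz.isUnit_critOrbit (hG : IsMisiurewicz d m n G) (hroot : aeval c G = 0)
    (hd : 2 ≤ d) (hm : 0 < m) {k : ℕ} (hk : k ∈ n.properDivisors) : IsUnit (critOrbit d c k) := by
  obtain ⟨m, rfl⟩ := Nat.exists_eq_add_of_le' hm
  obtain ⟨hdvd, hlt⟩ := Nat.mem_properDivisors.1 hk
  have hperiod := hG.orbitPeriod_eq hroot hd (by omega)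
  exact isUnit_critOrbit_of_dvd_orbitPeriod hd (hdvd.trans hperiod.symm.dvd)
    (hlt.trans_eq hperiod.symm)

lemma IsMisiurewicz.critOrbit_dvd_natCast (hG : IsMisiurewicz d m n G) (hroot : aeval c G = 0)
    (hd : 2 ≤ d) (hm : 2 ≤ m) (hn : 0 < n) : critOrbit d c n ∣ d := by
  obtain ⟨m, rfl⟩ := Nat.exists_eq_add_of_le' (show 1 ≤ m by omega)
  exact critOrbit_orbitPeriod_dvd_natCast hd (by omega) hn (hG.orbitPeriod_eq hroot hd hn)
    (hG.critOrbit_add_ne hroot hd hn)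

end OrbitIdeal

theorem orbit_ideal_factorization_general (d m n : ℕ) [Fact d.Prime] (hm : 2 ≤ m) (hn : 1 ≤ n)
    (G G0 : ℤ[X]) (hG : IsMisiurewicz d m n G) (hG0 : IsG0 d n G0)
    {ι : Type*} [Fintype ι] (ft : ι → ℤ[X])
    (hfact : G0.map (Int.castRingHom (ZMod d)) = ∏ i, (ft i).map (Int.castRingHom (ZMod d)))
    {R : Type*} [CommRing R] [IsDomain R] [CharZero R] (c : R) (hroot : aeval c G = 0) :
    Ideal.span {(fun x => x ^ d + c)^[n] 0} = ∏ i, Ideal.span {(d : R), aeval c (ft i)} := by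
  have hd : 2 ≤ d := (Fact.out : d.Prime).two_le
  have hdvd : critOrbit d c n ∣ d := hG.critOrbit_dvd_natCast hroot hd hm hn
  have hassoc : Associated (aeval c G0) (critOrbit d c n) :=
    hG0.associated_aeval hd hn fun k hk => hG.isUnit_critOrbit hroot hd (by omega) hk
  have hsep : (∏ i, (ft i).map (Int.castRingHom (ZMod d))).Separable :=
    hfact ▸ hG0.separable_map hn
  rw [← Polynomial.map_prod] at hfact
  calc Ideal.span {critOrbit d c n}
      = Ideal.span {(d : R), aeval c G0} := by
        rw [Ideal.span_insert, Ideal.span_singleton_eq_span_singleton.2 hassoc, right_eq_sup,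
          Ideal.span_singleton_le_span_singleton]
        exact hdvd
    _ = Ideal.span {(d : R), aeval c (∏ i, ft i)} := span_natCast_aeval_congr hfact c
    _ = ∏ i, Ideal.span {(d : R), aeval c (ft i)} :=
        (prod_span_natCast_aeval_of_separable hsep c).symm

/-- Let `d` be a prime, `m ≥ 2`, `n ≥ 1`. Suppose the reduction of
`G_{d,0,n}` modulo `d` factors as `f_1 ⋯ f_k` with the `f_i ∈ 𝔽_d[c]` distinct irreducible,
and let `f̃_i ∈ ℤ[c]` be any lifts. If `c₀` is a root of `G_{d,m,n}` and `K = ℚ(c₀)`, then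
`(a_n) = (d, f̃_1(c₀)) ⋯ (d, f̃_k(c₀))` in `O_K`, where `a_n = f_{c₀,d}^n(0)`. -/
theorem orbit_ideal_factorization (d m n : ℕ) [hd : Fact d.Prime] (hm : 2 ≤ m) (hn : 1 ≤ n)
    (G G0 : Polynomial ℤ) (hG : IsMisiurewicz d m n G) (hG0 : IsG0 d n G0)
    (k : ℕ) (f : Fin k → Polynomial (ZMod d))
    (hfirr : ∀ i, Irreducible (f i)) (hfdist : Function.Injective f)
    (hfact : G0.map (Int.castRingHom (ZMod d)) = ∏ i, f i)
    (ft : Fin k → Polynomial ℤ) (hlift : ∀ i, (ft i).map (Int.castRingHom (ZMod d)) = f i)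
    (K : Type*) [Field K] [NumberField K] (c₀ : NumberField.RingOfIntegers K)
    (hroot : Polynomial.aeval (c₀ : K) G = 0)
    (hgen : Algebra.adjoin ℚ {(c₀ : K)} = ⊤) :
    Ideal.span {(fun x => x ^ d + c₀)^[n] 0} =
      ∏ i, Ideal.span {(d : NumberField.RingOfIntegers K), Polynomial.aeval c₀ (ft i)} :=
  orbit_ideal_factorization_general d m n hm hn G G0 hG hG0 ft (by simp only [hlift, hfact]) c₀
    (by rwa [aeval_algebraMap_apply, NumberField.RingOfIntegers.coe_eq_zero_iff] at hroot)
end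
end

section
/- Let d be a rational prime, m ≥ 2, and n, k ≥ 1. Then the resultant Res(G_{d,m,n}, G_{d,0,k}) equals ±d^{deg(G_{d,0,n})} if n = k, and equals ±1 if n ≠ k. -/
open Polynomial

noncomputable section

/-- The Sylvester matrix of two polynomials `f, g ∈ ℤ[x]`: the first `g.natDegree` rows
carry the coefficients of `f` and the remaining `f.natDegree` rows carry the
coefficients of `g`, each shifted one step to the right in successive rows. -/
def sylvesterMatrix (f g : Polynomial ℤ) :
    Matrix (Fin (f.natDegree + g.natDegree)) (Fin (f.natDegree + g.natDegree)) ℤ :=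
  Matrix.of fun i j =>
    if (i : ℕ) < g.natDegree then
      if (i : ℕ) ≤ (j : ℕ) ∧ (j : ℕ) ≤ (i : ℕ) + f.natDegree then
        f.coeff (f.natDegree - ((j : ℕ) - (i : ℕ)))
      else 0
    else
      if (i : ℕ) - g.natDegree ≤ (j : ℕ) ∧ (j : ℕ) ≤ ((i : ℕ) - g.natDegree) + g.natDegree then
        g.coeff (g.natDegree - ((j : ℕ) - ((i : ℕ) - g.natDegree)))
      else 0

/-- The resultant of two polynomials over `ℤ`, as the determinant of their Sylvester matrix. -/
def resultantZ (f g : Polynomial ℤ) : ℤ := (sylvesterMatrix f g).det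

/-! Write `a_i = f_c^i(0)` and `Φ_k = G_{d,0,k}`. The `a_i` form a rigid divisibility sequence, so
`Φ_k` is a monic polynomial which is coprime to `a_i` unless `k ∣ i`. Up to fractions whose
numerator and denominator are coprime to `Φ_k`, the difference `a_{m+j} - a_m` is trivial if
`k ∤ j` and equal to `a_{m+k} - a_m` if `k ∣ j`. In the Möbius product `F_{d,m+1,n}` everything
therefore cancels, except for `n = k`, where `(x ^ d - y ^ d) / (x - y)` with `x = a_{m+k}` and
`y = a_m` remains. As `x ≡ y` modulo `Φ_k`, this is `d * y ^ (d - 1)`; if `k ∣ m`, so that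
`Φ_k ∣ y`, the division by `F_{d,1,k}` removes the factor `a_k ^ (d - 1)` and leaves `d` times a
unit modulo `Φ_k`. So modulo the monic polynomial `Φ_k`, `G_{d,m+1,n}` is a unit times `d` or
`1`, which gives the resultant.
-/

section Resultant

theorem sylvester_eq_submatrix_sylvesterMatrix (f g : ℤ[X]) :
    sylvester f g f.natDegree g.natDegree =
      (sylvesterMatrix f g).transpose.submatrix Fin.revPerm Fin.revPerm := by
  ext i j
  have hi := i.isLt
  simp only [Matrix.submatrix_apply, Matrix.transpose_apply, sylvesterMatrix, sylvester,
    Matrix.of_apply, Fin.revPerm_apply, Fin.val_rev, Set.mem_Icc]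
  induction j using Fin.addCases with
  | left j =>
    have hrow : ¬f.natDegree + g.natDegree - (j + 1) < g.natDegree := by omega
    rw [Fin.addCases_left, Fin.val_castAdd, if_neg hrow]
    split_ifs <;> first | rfl | omega | exact congrArg _ (by omega)
  | right j =>
    have hrow : f.natDegree + g.natDegree - (f.natDegree + j + 1) < g.natDegree := by omega
    rw [Fin.addCases_right, Fin.val_natAdd, if_pos hrow]
    split_ifs <;> first | rfl | omega | exact congrArg _ (by omega)

theorem resultantZ_eq_resultant (f g : ℤ[X]) : resultantZ f g = resultant f g := by
  rw [resultant, sylvester_eq_submatrix_sylvesterMatrix, Matrix.det_submatrix_equiv_self,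
    Matrix.det_transpose, resultantZ]

variable {R : Type*} [CommRing R] {f f₁ f₂ g s t : R[X]}

theorem associated_resultant_of_natDegree_le (hg : g.Monic) {N : ℕ} (hN : f.natDegree ≤ N) :
    Associated (resultant f g N g.natDegree) (resultant f g) := by
  obtain ⟨k, rfl⟩ := Nat.exists_eq_add_of_le hN
  rw [resultant_add_left_deg _ _ _ _ _ le_rfl, coeff_natDegree, hg.leadingCoeff, one_pow, mul_one]
  exact associated_unit_mul_left _ _ (isUnit_one.neg.pow _)

theorem associated_resultant_of_dvd_sub (hg : g.Monic) (h : g ∣ f₁ - f₂) :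
    Associated (resultant f₁ g) (resultant f₂ g) := by
  obtain ⟨q, hq⟩ := h
  let N := f₁.natDegree + f₂.natDegree + (q.natDegree + g.natDegree)
  have hN : resultant f₁ g N g.natDegree = resultant f₂ g N g.natDegree := by
    rw [sub_eq_iff_eq_add'.1 hq]
    exact resultant_add_mul_left f₂ g q N g.natDegree (by omega) le_rfl
  have h₁ := associated_resultant_of_natDegree_le (f := f₁) hg (N := N) (by omega)
  have h₂ := associated_resultant_of_natDegree_le (f := f₂) hg (N := N) (by omega)
  exact h₁.symm.trans (hN ▸ h₂)

theorem associated_resultant_mul (hg : g.Monic) :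
    Associated (resultant (f₁ * f₂) g) (resultant f₁ g * resultant f₂ g) := by
  rw [← resultant_mul_left f₁ f₂ g _ le_rfl]
  exact (associated_resultant_of_natDegree_le hg natDegree_mul_le).symm

theorem isUnit_resultant_of_isCoprime (hg : g.Monic) (h : IsCoprime f g) :
    IsUnit (resultant f g) := by
  rw [resultant_comm]
  exact (isUnit_one.neg.pow _).mul ((isUnit_resultant_iff_isCoprime hg).2 h.symm)

theorem associated_resultant_pow_natDegree (hg : g.Monic) {r : R} (hs : IsCoprime s g)
    (ht : IsCoprime t g) (h : g ∣ f * s - C r * t) :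
    Associated (resultant f g) (r ^ g.natDegree) := by
  have hs' := isUnit_resultant_of_isCoprime hg hs
  have ht' := isUnit_resultant_of_isCoprime hg ht
  have hC : resultant (C r) g = r ^ g.natDegree := by
    rw [natDegree_C, resultant_C_zero_left]
  have hmul : Associated (resultant f g * resultant s g) (r ^ g.natDegree * resultant t g) :=
    hC ▸ (associated_resultant_mul hg).symm.trans
      ((associated_resultant_of_dvd_sub hg h).trans (associated_resultant_mul hg))
  exact (associated_mul_unit_right _ _ hs').trans
    (hmul.trans (associated_mul_unit_left _ _ ht'))

end Resultant

section Rigid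

/-- A sequence `a` is a *rigid divisibility sequence* if `a k` divides `a (k * l)` with a quotient
congruent to `1` modulo `a k`, and the ideal generated by `a i` and `a j` contains (hence is
generated by) `a (gcd i j)`. -/
structure IsRigidDvdSequence {R : Type*} [CommRing R] (a : ℕ → R) : Prop where
  ne_zero {n : ℕ} : 0 < n → a n ≠ 0
  gcd_mem_span (i j : ℕ) : a (i.gcd j) ∈ Ideal.span {a i, a j}
  sq_dvd_sub (k : ℕ) {l : ℕ} : 0 < l → a k ^ 2 ∣ a (k * l) - a k

open Classical in
/-- The primitive part of the `n`-th term of a divisibility sequence: the quotient of `a n` by the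
primitive parts of all `a j` with `j` a proper divisor of `n` (and `0` if the division is not
exact). -/
def primitivePart {R : Type*} [CommRing R] (a : ℕ → R) (n : ℕ) : R :=
  if h : ∏ j ∈ n.properDivisors.attach, primitivePart a j ∣ a n then h.choose else 0
termination_by n
decreasing_by exact (Nat.mem_properDivisors.1 j.2).2

variable {R : Type*} [CommRing R] {a P : ℕ → R}

theorem prod_divisors_primitivePart_of_dvd {n : ℕ} (hn : 0 < n)
    (h : ∏ j ∈ n.properDivisors, primitivePart a j ∣ a n) :
    ∏ j ∈ n.divisors, primitivePart a j = a n := by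
  rw [← Finset.prod_attach] at h
  rw [← Nat.cons_self_properDivisors hn.ne', Finset.prod_cons, primitivePart, dif_pos h,
    mul_comm, ← Finset.prod_attach]
  exact h.choose_spec.symm

theorem dvd_of_prod_divisors_eq {n : ℕ} (hn : 0 < n) (hP : ∏ j ∈ n.divisors, P j = a n) :
    P n ∣ a n :=
  hP ▸ Finset.dvd_prod_of_mem _ (Nat.mem_divisors_self _ hn.ne')

namespace IsRigidDvdSequence

theorem dvd_of_dvd (ha : IsRigidDvdSequence a) {k n : ℕ} (hn : 0 < n) (h : k ∣ n) :
    a k ∣ a n := by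
  obtain ⟨l, rfl⟩ := h
  have := (dvd_pow_self (a k) two_ne_zero).trans (ha.sq_dvd_sub k (Nat.pos_of_mul_pos_left hn))
  exact (dvd_sub_self_right).1 this

variable [IsDomain R]

-- `P n` divides `a n / a g = 1 + a g * q` whenever `g` is a proper divisor of `n`.
theorem isCoprime_of_proper_dvd (ha : IsRigidDvdSequence a) {g n : ℕ} (hn : 0 < n)
    (hP : ∀ j, j ∣ n → ∏ i ∈ j.divisors, P i = a j) (hgn : g ∣ n) (hne : g ≠ n) :
    IsCoprime (P n) (a g) := by
  have hg : 0 < g := Nat.pos_of_dvd_of_pos hgn hn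
  have hdvd : P n * a g ∣ a n := by
    have hnot : n ∉ g.divisors := fun h => hne (Nat.dvd_antisymm hgn (Nat.dvd_of_mem_divisors h))
    rw [← hP g hgn, ← hP n dvd_rfl, ← Finset.prod_insert hnot]
    refine Finset.prod_dvd_prod_of_subset _ _ _ (Finset.insert_subset ?_ ?_)
    · exact Nat.mem_divisors_self _ hn.ne'
    · exact Nat.divisors_subset_of_dvd hn.ne' hgn
  obtain ⟨z, hz⟩ := hdvd
  obtain ⟨l, rfl⟩ := hgn
  obtain ⟨q, hq⟩ := ha.sq_dvd_sub g (Nat.pos_of_mul_pos_left hn)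
  refine ⟨z, -q, mul_left_cancel₀ (ha.ne_zero hg) ?_⟩
  linear_combination hq - hz

theorem isCoprime_of_not_dvd (ha : IsRigidDvdSequence a) {i n : ℕ} (hn : 0 < n)
    (hP : ∀ j, j ∣ n → ∏ i ∈ j.divisors, P i = a j) (hi : ¬ n ∣ i) : IsCoprime (P n) (a i) := by
  have hgcd : n.gcd i ≠ n := fun h => hi (Nat.gcd_eq_left_iff_dvd.1 h)
  obtain ⟨u, v, huv⟩ := ha.isCoprime_of_proper_dvd hn hP (Nat.gcd_dvd_left n i) hgcd
  obtain ⟨x, y, hxy⟩ := Ideal.mem_span_pair.1 (ha.gcd_mem_span n i)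
  obtain ⟨b, hb⟩ := dvd_of_prod_divisors_eq hn (hP n dvd_rfl)
  exact ⟨u + v * x * b, v * y, by linear_combination huv + v * hxy - v * x * hb⟩

theorem isCoprime_of_ne (ha : IsRigidDvdSequence a) {m n : ℕ} (hm : 0 < m) (hn : 0 < n)
    (hPm : ∀ j, j ∣ m → ∏ i ∈ j.divisors, P i = a j)
    (hPn : ∀ j, j ∣ n → ∏ i ∈ j.divisors, P i = a j) (hmn : m ≠ n) : IsCoprime (P m) (P n) := by
  by_cases h : m ∣ n
  · have hnm : ¬ n ∣ m := fun h' => hmn (Nat.dvd_antisymm h h')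
    exact ((ha.isCoprime_of_not_dvd hn hPn hnm).of_isCoprime_of_dvd_right
      (dvd_of_prod_divisors_eq hm (hPm m dvd_rfl))).symm
  · exact (ha.isCoprime_of_not_dvd hm hPm h).of_isCoprime_of_dvd_right
      (dvd_of_prod_divisors_eq hn (hPn n dvd_rfl))

theorem prod_divisors_primitivePart (ha : IsRigidDvdSequence a) {n : ℕ} (hn : 0 < n) :
    ∏ j ∈ n.divisors, primitivePart a j = a n := by
  induction n using Nat.strong_induction_on with
  | _ n ih =>
    have hlt : ∀ {j}, j ∈ n.properDivisors → 0 < j ∧ j < n := fun hj =>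
      ⟨Nat.pos_of_mem_properDivisors hj, (Nat.mem_properDivisors.1 hj).2⟩
    have hP : ∀ {j}, j ∈ n.properDivisors →
        ∀ i, i ∣ j → ∏ l ∈ i.divisors, primitivePart a l = a i := fun hj i hij =>
      ih i ((Nat.le_of_dvd (hlt hj).1 hij).trans_lt (hlt hj).2)
        (Nat.pos_of_dvd_of_pos hij (hlt hj).1)
    refine prod_divisors_primitivePart_of_dvd hn (Finset.prod_dvd_of_coprime ?_ ?_)
    · exact fun i hi j hj hij =>
        ha.isCoprime_of_ne (hlt hi).1 (hlt hj).1 (hP hi) (hP hj) hij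
    · exact fun j hj => (dvd_of_prod_divisors_eq (hlt hj).1 (hP hj j dvd_rfl)).trans
        (ha.dvd_of_dvd hn (Nat.mem_properDivisors.1 hj).1)

theorem primitivePart_dvd (ha : IsRigidDvdSequence a) {n : ℕ} (hn : 0 < n) :
    primitivePart a n ∣ a n :=
  dvd_of_prod_divisors_eq hn (ha.prod_divisors_primitivePart hn)

theorem isCoprime_primitivePart (ha : IsRigidDvdSequence a) {i n : ℕ} (hn : 0 < n)
    (hi : ¬ n ∣ i) : IsCoprime (primitivePart a n) (a i) :=
  ha.isCoprime_of_not_dvd hn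
    (fun _ hj => ha.prod_divisors_primitivePart (Nat.pos_of_dvd_of_pos hj hn)) hi

theorem algebraMap_primitivePart (ha : IsRigidDvdSequence a) (K : Type*) [Field K] [Algebra R K]
    [FaithfulSMul R K] {n : ℕ} (hn : 0 < n) :
    algebraMap R K (primitivePart a n) =
      ∏ j ∈ n.divisors, algebraMap R K (a j) ^ ArithmeticFunction.moebius (n / j) := by
  have hne {j : ℕ} (hj : 0 < j) : algebraMap R K (a j) ≠ 0 := by
    simpa using ha.ne_zero hj
  have hne' {j : ℕ} (hj : 0 < j) : algebraMap R K (primitivePart a j) ≠ 0 :=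
    fun h => hne hj (zero_dvd_iff.1 (h ▸ map_dvd _ (ha.primitivePart_dvd hj)))
  have hprod : ∀ j > 0, ∏ i ∈ j.divisors, algebraMap R K (primitivePart a i) =
      algebraMap R K (a j) := fun j hj => by
    rw [← map_prod, ha.prod_divisors_primitivePart hj]
  rw [← (ArithmeticFunction.prod_eq_iff_prod_pow_moebius_eq_of_nonzero (fun _ => hne')
    (fun _ => hne)).1 hprod n hn, Nat.prod_divisorsAntidiagonal'
    fun i j => algebraMap R K (a j) ^ ArithmeticFunction.moebius i]

theorem monic_primitivePart {a : ℕ → R[X]} (ha : IsRigidDvdSequence a)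
    (hmonic : ∀ n, 0 < n → (a n).Monic) {n : ℕ} (hn : 0 < n) : (primitivePart a n).Monic := by
  induction n using Nat.strong_induction_on with
  | _ n ih =>
    have hprod := ha.prod_divisors_primitivePart hn
    rw [← Nat.cons_self_properDivisors hn.ne', Finset.prod_cons, mul_comm] at hprod
    have hproper : (∏ j ∈ n.properDivisors, primitivePart a j).Monic :=
      monic_prod_of_monic _ _ fun j hj =>
        ih j (Nat.mem_properDivisors.1 hj).2 (Nat.pos_of_mem_properDivisors hj)
    exact hproper.of_mul_monic_left (hprod ▸ hmonic n hn)

end IsRigidDvdSequence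

end Rigid

section CoprimeFractions

theorem isCoprime_of_dvd_sub {R : Type*} [CommRing R] {p x y : R} (h : p ∣ x - y)
    (hy : IsCoprime y p) : IsCoprime x p := by
  obtain ⟨q, hq⟩ := h
  exact sub_eq_iff_eq_add'.1 hq ▸ hy.add_mul_left_left q

variable {R : Type*} [CommRing R] [IsDomain R] (K : Type*) [Field K] [Algebra R K]

/-- The units of the localization of `R` at the elements coprime to `p`, as a submonoid of the
fraction field `K`: the fractions whose numerator and denominator are coprime to `p`.
They are also required to be nonzero, because every element is coprime to `p` if `p` is a unit. -/
def coprimeFractions (p : R) : Submonoid K where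
  carrier := {x | ∃ s t : R, (s ≠ 0 ∧ IsCoprime s p) ∧ (t ≠ 0 ∧ IsCoprime t p) ∧
    x = algebraMap R K s / algebraMap R K t}
  one_mem' := ⟨1, 1, ⟨one_ne_zero, isCoprime_one_left⟩, ⟨one_ne_zero, isCoprime_one_left⟩, by simp⟩
  mul_mem' := by
    rintro _ _ ⟨s, t, ⟨hs, hsp⟩, ⟨ht, htp⟩, rfl⟩ ⟨s', t', ⟨hs', hsp'⟩, ⟨ht', htp'⟩, rfl⟩
    exact ⟨s * s', t * t', ⟨mul_ne_zero hs hs', hsp.mul_left hsp'⟩,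
      ⟨mul_ne_zero ht ht', htp.mul_left htp'⟩, by rw [map_mul, map_mul, div_mul_div_comm]⟩

variable {K} {p : R} {x y : K}

theorem algebraMap_mem_coprimeFractions {s : R} (hs : s ≠ 0) (hsp : IsCoprime s p) :
    algebraMap R K s ∈ coprimeFractions K p :=
  ⟨s, 1, ⟨hs, hsp⟩, ⟨one_ne_zero, isCoprime_one_left⟩, by simp⟩

theorem algebraMap_div_mem_coprimeFractions [FaithfulSMul R K] {a b : R} (ha : a ≠ 0)
    (h : p * b ∣ a - b) : algebraMap R K a / algebraMap R K b ∈ coprimeFractions K p := by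
  obtain ⟨q, hq⟩ := h
  obtain rfl : a = b * (1 + p * q) := by linear_combination hq
  have hb : algebraMap R K b ≠ 0 := by simpa using left_ne_zero_of_mul ha
  rw [map_mul, mul_div_cancel_left₀ _ hb]
  exact algebraMap_mem_coprimeFractions (right_ne_zero_of_mul ha)
    (isCoprime_of_dvd_sub (by simp) isCoprime_one_left)

theorem inv_mem_coprimeFractions (hx : x ∈ coprimeFractions K p) :
    x⁻¹ ∈ coprimeFractions K p := by
  obtain ⟨s, t, hs, ht, rfl⟩ := hx
  exact ⟨t, s, ht, hs, inv_div _ _⟩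

theorem div_mem_coprimeFractions (hx : x ∈ coprimeFractions K p) (hy : y ∈ coprimeFractions K p) :
    x / y ∈ coprimeFractions K p :=
  div_eq_mul_inv x y ▸ mul_mem hx (inv_mem_coprimeFractions hy)

theorem exists_isCoprime_dvd_mul_sub_mul [FaithfulSMul R K] {f h u r : R} (hh : h ≠ 0)
    (hu : IsCoprime u p) (hdvd : p ∣ h - r * u)
    (hf : algebraMap R K f / algebraMap R K h ∈ coprimeFractions K p) :
    ∃ s t, IsCoprime s p ∧ IsCoprime t p ∧ p ∣ f * s - r * t := by
  obtain ⟨s, t, ⟨-, hs⟩, ⟨ht₀, ht⟩, hst⟩ := hf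
  have hcross : f * t = s * h := FaithfulSMul.algebraMap_injective R K <| by
    rw [map_mul, map_mul]
    exact (div_eq_div_iff (by simpa using hh) (by simpa using ht₀)).1 hst
  refine ⟨t, s * u, ht, hs.mul_left hu, ?_⟩
  rw [hcross, mul_left_comm, ← mul_sub]
  exact hdvd.mul_left s

end CoprimeFractions

section Moebius

variable {G : Type*} [CommGroupWithZero G]

theorem prod_ite_dvd_zpow_moebius {c : G} (hc : c ≠ 0) {k n : ℕ} (hn : 0 < n) :
    ∏ j ∈ n.divisors, (if k ∣ j then c else 1) ^ ArithmeticFunction.moebius (n / j) =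
      if n = k then c else 1 := by
  have hsum : ∀ i > 0, ∏ j ∈ i.divisors, (if j = k then c else 1) = if k ∣ i then c else 1 :=
    fun i hi => by simp [Finset.prod_ite_eq', hi.ne']
  have := (ArithmeticFunction.prod_eq_iff_prod_pow_moebius_eq_of_nonzero
    (fun i _ => by split_ifs <;> simp [hc]) (fun i _ => by split_ifs <;> simp [hc])).1 hsum n hn
  rwa [Nat.prod_divisorsAntidiagonal'
    fun i j => (if k ∣ j then c else 1) ^ ArithmeticFunction.moebius i] at this

theorem prod_zpow_moebius_div_mem {U : Submonoid G} (hU : ∀ {x}, x ∈ U → x⁻¹ ∈ U) {q : ℕ → G}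
    {k n : ℕ} (hn : 0 < n) (hqk : q k ≠ 0) (hunit : ∀ j, ¬ k ∣ j → q j ∈ U)
    (hdiv : ∀ j > 0, k ∣ j → q j / q k ∈ U) :
    (∏ j ∈ n.divisors, q j ^ ArithmeticFunction.moebius (n / j)) / (if n = k then q k else 1) ∈
      U := by
  rw [← prod_ite_dvd_zpow_moebius hqk hn, ← Finset.prod_div_distrib]
  refine Submonoid.prod_mem _ fun j hj => ?_
  rw [← div_zpow]
  have hmem : q j / (if k ∣ j then q k else 1) ∈ U := by
    split_ifs with h
    · exact hdiv j (Nat.pos_of_mem_divisors hj) h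
    · simpa using hunit j h
  obtain ⟨e, he | he⟩ := (ArithmeticFunction.moebius (n / j)).eq_nat_or_neg
  · simpa [he] using pow_mem hmem e
  · rw [he, zpow_neg, zpow_natCast]
    exact hU (pow_mem hmem e)

end Moebius

section GeomSum

theorem dvd_geom_sum₂_sub {R : Type*} [CommRing R] {p x y : R} (h : p ∣ x - y) (n : ℕ) :
    p ∣ ∑ i ∈ Finset.range n, x ^ i * y ^ (n - 1 - i) - n * y ^ (n - 1) := by
  rw [← geom_sum₂_self, ← Finset.sum_sub_distrib]
  refine Finset.dvd_sum fun i _ => ?_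
  rw [← sub_mul]
  exact (h.trans (sub_dvd_pow_sub_pow x y i)).mul_right _

theorem geom_sum₂_mul_mul {R : Type*} [CommSemiring R] (c x y : R) (n : ℕ) :
    ∑ i ∈ Finset.range n, (c * x) ^ i * (c * y) ^ (n - 1 - i) =
      c ^ (n - 1) * ∑ i ∈ Finset.range n, x ^ i * y ^ (n - 1 - i) := by
  rw [Finset.mul_sum]
  refine Finset.sum_congr rfl fun i hi => ?_
  obtain ⟨e, he⟩ := Nat.exists_eq_add_of_le (Nat.le_sub_one_of_lt (Finset.mem_range.1 hi))
  rw [he, Nat.add_sub_cancel_left]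
  ring

end GeomSum

section CritPoly

variable {d : ℕ}

theorem monic_critPoly_succ_and_natDegree (hd : 2 ≤ d) (i : ℕ) :
    (critPoly d (i + 1)).Monic ∧ (critPoly d (i + 1)).natDegree = d ^ i := by
  induction i with
  | zero => simp [critPoly, show d ≠ 0 by omega, monic_X]
  | succ i ih =>
    have hdeg : (critPoly d (i + 1) ^ d).natDegree = d ^ (i + 1) := by
      rw [ih.1.natDegree_pow, ih.2, pow_succ']
    have hlt : (X : ℤ[X]).natDegree < (critPoly d (i + 1) ^ d).natDegree := by
      rw [hdeg, natDegree_X]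
      exact Nat.one_lt_pow i.succ_ne_zero hd
    exact ⟨(ih.1.pow d).add_of_left (degree_lt_degree hlt),
      (natDegree_add_eq_left_of_natDegree_lt hlt).trans hdeg⟩

theorem monic_critPoly (hd : 2 ≤ d) {i : ℕ} (hi : 0 < i) : (critPoly d i).Monic := by
  obtain ⟨i, rfl⟩ := Nat.exists_eq_add_of_lt hi
  simpa using (monic_critPoly_succ_and_natDegree hd i).1

theorem injective_critPoly (hd : 2 ≤ d) : Function.Injective (critPoly d) := by
  have hmono : StrictMono fun i => (critPoly d i).natDegree := by
    refine strictMono_nat_of_lt_succ fun i => ?_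
    rw [(monic_critPoly_succ_and_natDegree hd i).2]
    cases i with
    | zero => simp [critPoly]
    | succ i =>
      rw [(monic_critPoly_succ_and_natDegree hd i).2]
      exact Nat.pow_lt_pow_succ hd
  exact Function.Injective.of_comp (f := natDegree) hmono.injective

theorem critPoly_sub_dvd_critPoly_add_sub (s t r : ℕ) :
    critPoly d s - critPoly d t ∣ critPoly d (s + r) - critPoly d (t + r) := by
  induction r with
  | zero => rfl
  | succ r ih =>
    rw [← add_assoc, ← add_assoc, critPoly, critPoly, add_sub_add_right_eq_sub]
    exact ih.trans (sub_dvd_pow_sub_pow _ _ _)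

theorem critPoly_dvd_critPoly_add_sub (k r : ℕ) :
    critPoly d k ∣ critPoly d (k + r) - critPoly d r := by
  simpa [critPoly] using critPoly_sub_dvd_critPoly_add_sub (d := d) k 0 r

theorem critPoly_dvd_critPoly_of_dvd {k n : ℕ} (h : k ∣ n) : critPoly d k ∣ critPoly d n := by
  obtain ⟨l, rfl⟩ := h
  induction l with
  | zero => simp [critPoly]
  | succ l ih =>
    rw [Nat.mul_succ, Nat.add_comm]
    exact (dvd_iff_dvd_of_dvd_sub (critPoly_dvd_critPoly_add_sub k (k * l))).2 ih

theorem critPoly_gcd_mem_span (i j : ℕ) :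
    critPoly d (i.gcd j) ∈ Ideal.span {critPoly d i, critPoly d j} := by
  induction i, j using Nat.gcd.induction with
  | H0 j => simpa using Ideal.subset_span (by simp)
  | H1 i j _ ih =>
    have hmod : critPoly d (j % i) ∈ Ideal.span {critPoly d i, critPoly d j} := by
      obtain ⟨q, hq⟩ := (critPoly_dvd_critPoly_of_dvd (Dvd.intro (j / i) rfl)).trans
        (critPoly_dvd_critPoly_add_sub (d := d) (i * (j / i)) (j % i))
      rw [Nat.div_add_mod] at hq
      exact Ideal.mem_span_pair.2 ⟨-q, 1, by linear_combination hq⟩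
    rw [Nat.gcd_rec]
    refine (Ideal.span_le (I := Ideal.span {critPoly d i, critPoly d j})).2 ?_ ih
    rintro _ (rfl | rfl)
    · exact hmod
    · exact Ideal.subset_span (by simp)

end CritPoly

section OrbitDiff

variable {d k : ℕ} {p : ℤ[X]}

/-- The polynomial `f_c^{m+j}(0) - f_c^m(0)`, whose roots are the parameters `c` for which the
critical orbit is periodic of period dividing `j` after `m` steps. -/
def orbitDiff (d m j : ℕ) : ℤ[X] := critPoly d (m + j) - critPoly d m

/-- The polynomial quotient of `orbitDiff d (m + 1) j` by `orbitDiff d m j`. -/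
def orbitRatio (d m j : ℕ) : ℤ[X] :=
  ∑ i ∈ Finset.range d, critPoly d (m + j) ^ i * critPoly d m ^ (d - 1 - i)

theorem orbitDiff_zero_left (j : ℕ) : orbitDiff d 0 j = critPoly d j := by
  simp [orbitDiff, critPoly]

theorem orbitDiff_ne_zero (hd : 2 ≤ d) (m : ℕ) {j : ℕ} (hj : 0 < j) : orbitDiff d m j ≠ 0 :=
  sub_ne_zero.2 fun h => by have := injective_critPoly hd h; omega

theorem orbitRatio_mul_orbitDiff (m j : ℕ) :
    orbitRatio d m j * orbitDiff d m j = orbitDiff d (m + 1) j := by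
  rw [orbitRatio, orbitDiff, (Commute.all _ _).geom_sum₂_mul, orbitDiff,
    show m + 1 + j = m + j + 1 by omega, critPoly, critPoly, add_sub_add_right_eq_sub]

theorem orbitRatio_ne_zero (hd : 2 ≤ d) (m : ℕ) {j : ℕ} (hj : 0 < j) : orbitRatio d m j ≠ 0 :=
  left_ne_zero_of_mul (orbitRatio_mul_orbitDiff m j ▸ orbitDiff_ne_zero hd (m + 1) hj)

theorem orbitDiff_dvd_orbitDiff_add (m j r : ℕ) : orbitDiff d m j ∣ orbitDiff d (m + r) j := by
  have := critPoly_sub_dvd_critPoly_add_sub (d := d) (m + j) m r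
  rwa [add_right_comm] at this

theorem exists_lt_dvd_add (m : ℕ) (hk : 0 < k) : ∃ r < k, k ∣ m + r := by
  refine ⟨(k - m % k) % k, Nat.mod_lt _ hk, Nat.dvd_of_mod_eq_zero ?_⟩
  rw [Nat.add_mod, Nat.mod_mod, ← Nat.add_mod, ← Nat.mod_add_mod,
    Nat.add_sub_of_le (Nat.mod_lt m hk).le, Nat.mod_self]

-- The orbits of `f^{m+j}(0)` and `f^m(0)` both pass through a value divisible by `p` within `k`
-- steps; at this step, `x ^ d - y ^ d` with `p ∣ x, y` gains the factor `p`.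
theorem mul_orbitDiff_dvd_orbitDiff_add (hd : 2 ≤ d) (hk : 0 < k) (hp : p ∣ critPoly d k) (m : ℕ)
    {j : ℕ} (hkj : k ∣ j) : p * orbitDiff d m j ∣ orbitDiff d (m + k) j := by
  have hp' : ∀ {i}, k ∣ i → p ∣ critPoly d i := fun h => hp.trans (critPoly_dvd_critPoly_of_dvd h)
  obtain ⟨r, hrk, hr⟩ := exists_lt_dvd_add m hk
  have hratio : p ∣ orbitRatio d (m + r) j := by
    have hsub : p ∣ critPoly d (m + r + j) - critPoly d (m + r) :=
      dvd_sub (hp' (hr.add hkj)) (hp' hr)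
    refine (dvd_iff_dvd_of_dvd_sub (dvd_geom_sum₂_sub hsub d)).2 ?_
    exact ((hp' hr).trans (dvd_pow_self _ (by omega))).mul_left _
  calc
    p * orbitDiff d m j ∣ orbitRatio d (m + r) j * orbitDiff d (m + r) j :=
      mul_dvd_mul hratio (orbitDiff_dvd_orbitDiff_add m j r)
    _ = orbitDiff d (m + r + 1) j := orbitRatio_mul_orbitDiff _ _
    _ ∣ orbitDiff d (m + r + 1 + (k - r - 1)) j := orbitDiff_dvd_orbitDiff_add _ _ _
    _ = orbitDiff d (m + k) j := by congr 1; omega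

theorem mul_orbitDiff_dvd_orbitDiff_mul_sub (hd : 2 ≤ d) (hk : 0 < k) (hp : p ∣ critPoly d k)
    (m : ℕ) {l : ℕ} (hl : 0 < l) :
    p * orbitDiff d m k ∣ orbitDiff d m (k * l) - orbitDiff d m k := by
  induction l, hl using Nat.le_induction with
  | base => simp
  | succ l _ ih =>
    have hdvd : orbitDiff d m k ∣ orbitDiff d m (k * l) :=
      dvd_sub_self_right.1 ((dvd_mul_left _ _).trans ih)
    have hstep : orbitDiff d m (k * (l + 1)) - orbitDiff d m k = orbitDiff d (m + k) (k * l) := by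
      rw [orbitDiff, orbitDiff, orbitDiff, mul_add_one, add_comm (k * l), add_assoc]
      ring
    rw [hstep]
    exact (mul_dvd_mul_left p hdvd).trans
      (mul_orbitDiff_dvd_orbitDiff_add hd hk hp m (dvd_mul_right k l))

theorem isRigidDvdSequence_critPoly (hd : 2 ≤ d) : IsRigidDvdSequence (critPoly d) where
  ne_zero hn := (monic_critPoly hd hn).ne_zero
  gcd_mem_span := critPoly_gcd_mem_span
  sq_dvd_sub k l hl := by
    rcases k.eq_zero_or_pos with rfl | hk
    · simp
    · simpa only [orbitDiff_zero_left, sq] using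
        mul_orbitDiff_dvd_orbitDiff_mul_sub hd hk dvd_rfl 0 hl

end OrbitDiff

section Gleason

variable {d n k : ℕ}

/-- The Gleason polynomial: the primitive part `G_{d,0,k}` of `f_c^k(0)` in the critical orbit,
whose roots are the parameters `c` for which `0` has exact period `k`. -/
def gleason (d k : ℕ) : ℤ[X] := primitivePart (critPoly d) k

theorem monic_gleason (hd : 2 ≤ d) (hk : 0 < k) : (gleason d k).Monic :=
  (isRigidDvdSequence_critPoly hd).monic_primitivePart (fun _ => monic_critPoly hd) hk

theorem gleason_dvd_critPoly (hd : 2 ≤ d) (hk : 0 < k) : gleason d k ∣ critPoly d k :=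
  (isRigidDvdSequence_critPoly hd).primitivePart_dvd hk

theorem isCoprime_critPoly_gleason (hd : 2 ≤ d) (hk : 0 < k) {i : ℕ} (hi : ¬ k ∣ i) :
    IsCoprime (critPoly d i) (gleason d k) :=
  ((isRigidDvdSequence_critPoly hd).isCoprime_primitivePart hk hi).symm

theorem IsG0.eq_gleason {p : ℤ[X]} (hd : 2 ≤ d) (hn : 0 < n) (h : IsG0 d n p) :
    p = gleason d n :=
  IsFractionRing.injective ℤ[X] RF <|
    Eq.trans h ((isRigidDvdSequence_critPoly hd).algebraMap_primitivePart RF hn).symm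

theorem isCoprime_orbitDiff_gleason (hd : 2 ≤ d) (hk : 0 < k) (m : ℕ) {j : ℕ} (hj : ¬ k ∣ j) :
    IsCoprime (orbitDiff d m j) (gleason d k) := by
  obtain ⟨r, -, hr⟩ := exists_lt_dvd_add m hk
  have hzero : gleason d k ∣ critPoly d (m + r) :=
    (gleason_dvd_critPoly hd hk).trans (critPoly_dvd_critPoly_of_dvd hr)
  have hunit : IsCoprime (critPoly d (m + r + j)) (gleason d k) :=
    isCoprime_critPoly_gleason hd hk fun h => hj ((Nat.dvd_add_right hr).1 h)
  have hcongr : gleason d k ∣ orbitDiff d (m + r) j - critPoly d (m + r + j) := by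
    simpa [orbitDiff] using hzero
  exact (isCoprime_of_dvd_sub hcongr hunit).of_isCoprime_of_dvd_left
    (orbitDiff_dvd_orbitDiff_add m j r)

theorem prod_orbitDiff_zpow_moebius_div_mem (hd : 2 ≤ d) (hk : 0 < k) (hn : 0 < n) (m : ℕ) :
    (∏ j ∈ n.divisors, algebraMap ℤ[X] RF (orbitDiff d m j) ^ ArithmeticFunction.moebius (n / j)) /
      (if n = k then algebraMap ℤ[X] RF (orbitDiff d m k) else 1) ∈
        coprimeFractions RF (gleason d k) := by
  refine prod_zpow_moebius_div_mem inv_mem_coprimeFractions hn ?_ (fun j hj => ?_)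
    fun j hj hkj => ?_
  · simpa using orbitDiff_ne_zero hd m hk
  · have hj₀ : 0 < j := Nat.pos_of_ne_zero fun h => hj (h ▸ dvd_zero k)
    exact algebraMap_mem_coprimeFractions (orbitDiff_ne_zero hd m hj₀)
      (isCoprime_orbitDiff_gleason hd hk m hj)
  · obtain ⟨l, rfl⟩ := hkj
    exact algebraMap_div_mem_coprimeFractions (orbitDiff_ne_zero hd m hj)
      (mul_orbitDiff_dvd_orbitDiff_mul_sub hd hk (gleason_dvd_critPoly hd hk) m
        (Nat.pos_of_mul_pos_left hj))

end Gleason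

section Misiurewicz

variable {d m n k : ℕ}

theorem FRat_succ (d m n : ℕ) :
    FRat d (m + 1) n =
      (∏ j ∈ n.divisors,
        algebraMap ℤ[X] RF (orbitDiff d (m + 1) j) ^ ArithmeticFunction.moebius (n / j)) /
      ∏ j ∈ n.divisors,
        algebraMap ℤ[X] RF (orbitDiff d m j) ^ ArithmeticFunction.moebius (n / j) := by
  simp only [FRat, toRF, orbitDiff, Nat.add_sub_cancel, map_sub, div_zpow, Finset.prod_div_distrib]

theorem FRat_succ_mem_coprimeFractions (hd : 2 ≤ d) (hk : 0 < k) (hn : 0 < n) (hnk : n ≠ k)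
    (m : ℕ) : FRat d (m + 1) n ∈ coprimeFractions RF (gleason d k) := by
  have h := fun i => prod_orbitDiff_zpow_moebius_div_mem hd hk hn i
  simp only [if_neg hnk, div_one] at h
  exact FRat_succ d m n ▸ div_mem_coprimeFractions (h (m + 1)) (h m)

theorem FRat_succ_div_orbitRatio_mem_coprimeFractions (hd : 2 ≤ d) (hk : 0 < k) (m : ℕ) :
    FRat d (m + 1) k / algebraMap ℤ[X] RF (orbitRatio d m k) ∈
      coprimeFractions RF (gleason d k) := by
  have h := fun i => prod_orbitDiff_zpow_moebius_div_mem hd hk hk i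
  simp only [if_true] at h
  have hne : algebraMap ℤ[X] RF (orbitDiff d m k) ≠ 0 := by simpa using orbitDiff_ne_zero hd m hk
  have hmem := div_mem_coprimeFractions (h (m + 1)) (h m)
  rwa [div_div_div_comm, ← FRat_succ, ← orbitRatio_mul_orbitDiff, map_mul,
    mul_div_cancel_right₀ _ hne] at hmem

theorem GRat_succ_mem_coprimeFractions (hd : 2 ≤ d) (hk : 0 < k) (hn : 0 < n) (hnk : n ≠ k)
    (m : ℕ) : GRat d (m + 1) n ∈ coprimeFractions RF (gleason d k) := by
  have h := FRat_succ_mem_coprimeFractions hd hk hn hnk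
  rw [GRat]
  split_ifs
  · exact div_mem_coprimeFractions (h m) (h 0)
  · exact h m

theorem critPoly_dvd_orbitRatio_sub (m k : ℕ) :
    critPoly d k ∣ orbitRatio d m k - C (d : ℤ) * critPoly d m ^ (d - 1) := by
  rw [C_eq_natCast]
  refine dvd_geom_sum₂_sub ?_ d
  simpa only [add_comm] using critPoly_dvd_critPoly_add_sub k m

theorem orbitRatio_zero_left (hd : 2 ≤ d) (hk : 0 < k) :
    orbitRatio d 0 k = critPoly d k ^ (d - 1) := by
  refine mul_right_cancel₀ (monic_critPoly hd hk).ne_zero ?_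
  rw [pow_sub_one_mul (by omega), ← orbitDiff_zero_left, orbitRatio_mul_orbitDiff]
  simp [orbitDiff, critPoly, add_comm 1 k, show d ≠ 0 by omega]

theorem exists_orbitRatio_eq_mul (hd : 2 ≤ d) (hk : 0 < k) (hm : 0 < m) (hkm : k ∣ m) :
    ∃ h, orbitRatio d m k = orbitRatio d 0 k * h ∧ critPoly d k ∣ h - C (d : ℤ) := by
  have hunit : ∀ {i}, 0 < i → k ∣ i → ∃ z, critPoly d i = critPoly d k * z ∧
      critPoly d k ∣ z - 1 := by
    rintro _ hi ⟨l, rfl⟩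
    obtain ⟨q, hq⟩ := (isRigidDvdSequence_critPoly hd).sq_dvd_sub k (Nat.pos_of_mul_pos_left hi)
    exact ⟨1 + critPoly d k * q, by linear_combination hq, by simp⟩
  obtain ⟨x, hx, hx₁⟩ := hunit (Nat.add_pos_left hm k) (hkm.add dvd_rfl)
  obtain ⟨y, hy, hy₁⟩ := hunit hm hkm
  refine ⟨∑ i ∈ Finset.range d, x ^ i * y ^ (d - 1 - i), ?_, ?_⟩
  · rw [orbitRatio, hx, hy, geom_sum₂_mul_mul, orbitRatio_zero_left hd hk]
  · have hxy : critPoly d k ∣ x - y := by simpa using dvd_sub hx₁ hy₁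
    have hpow : critPoly d k ∣ y ^ (d - 1) - 1 :=
      hy₁.trans (by simpa using sub_dvd_pow_sub_pow y 1 (d - 1))
    have := dvd_add (dvd_geom_sum₂_sub hxy d) (hpow.mul_left (d : ℤ[X]))
    rwa [C_eq_natCast, ← sub_add_sub_cancel, ← mul_sub_one]

theorem exists_GRat_succ_div_mem_coprimeFractions (hd : 2 ≤ d) (hk : 0 < k) (hm : 0 < m) :
    ∃ h u : ℤ[X], h ≠ 0 ∧ IsCoprime u (gleason d k) ∧ gleason d k ∣ h - C (d : ℤ) * u ∧
      GRat d (m + 1) k / algebraMap ℤ[X] RF h ∈ coprimeFractions RF (gleason d k) := by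
  have hF := FRat_succ_div_orbitRatio_mem_coprimeFractions hd hk
  have hdvd := gleason_dvd_critPoly hd hk
  by_cases hkm : k ∣ m
  · obtain ⟨h, hh, hmod⟩ := exists_orbitRatio_eq_mul hd hk hm hkm
    have hne : orbitRatio d 0 k * h ≠ 0 := hh ▸ orbitRatio_ne_zero hd m hk
    have hne₀ : algebraMap ℤ[X] RF (orbitRatio d 0 k) ≠ 0 := by
      simpa using left_ne_zero_of_mul hne
    refine ⟨h, 1, right_ne_zero_of_mul hne, isCoprime_one_left,
      by simpa using hdvd.trans hmod, ?_⟩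
    have hmem := div_mem_coprimeFractions (hF m) (hF 0)
    rw [div_div_div_comm, hh, map_mul, mul_div_cancel_left₀ _ hne₀] at hmem
    rwa [GRat, Nat.add_sub_cancel, if_pos hkm]
  · refine ⟨orbitRatio d m k, critPoly d m ^ (d - 1), orbitRatio_ne_zero hd m hk,
      (isCoprime_critPoly_gleason hd hk hkm).pow_left,
      hdvd.trans (critPoly_dvd_orbitRatio_sub m k), ?_⟩
    simpa [GRat, hkm] using hF m

theorem associated_resultantZ_gleason {G h u : ℤ[X]} {r : ℤ} (hd : 2 ≤ d) (hk : 0 < k)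
    (hh : h ≠ 0) (hu : IsCoprime u (gleason d k)) (hdvd : gleason d k ∣ h - C r * u)
    (hG : toRF G / algebraMap ℤ[X] RF h ∈ coprimeFractions RF (gleason d k)) :
    Associated (resultantZ G (gleason d k)) (r ^ (gleason d k).natDegree) := by
  obtain ⟨s, t, hs, ht, hst⟩ := exists_isCoprime_dvd_mul_sub_mul hh hu hdvd hG
  rw [resultantZ_eq_resultant]
  exact associated_resultant_pow_natDegree (monic_gleason hd hk) hs ht hst

end Misiurewicz

theorem resultant_misiurewicz_G0_general (d m n k : ℕ) (hd : 2 ≤ d) (hm : 2 ≤ m)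
    (hn : 1 ≤ n) (hk : 1 ≤ k)
    (G G0n G0k : Polynomial ℤ) (hG : IsMisiurewicz d m n G)
    (hG0n : IsG0 d n G0n) (hG0k : IsG0 d k G0k) :
    (n = k →
      resultantZ G G0k = (d : ℤ) ^ G0n.natDegree ∨
        resultantZ G G0k = -(d : ℤ) ^ G0n.natDegree) ∧
    (n ≠ k → resultantZ G G0k = 1 ∨ resultantZ G G0k = -1) := by
  obtain ⟨m, rfl⟩ := Nat.exists_eq_add_of_le' (one_le_two.trans hm)
  obtain rfl := hG0n.eq_gleason hd hn
  obtain rfl := hG0k.eq_gleason hd hk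
  constructor
  · rintro rfl
    obtain ⟨h, u, hh, hu, hdvd, hmem⟩ :=
      exists_GRat_succ_div_mem_coprimeFractions hd hn (Nat.le_of_succ_le_succ hm)
    exact Int.associated_iff.1 (associated_resultantZ_gleason hd hn hh hu hdvd (hG ▸ hmem))
  · intro hnk
    have hmem := GRat_succ_mem_coprimeFractions hd hk hn hnk m
    have := associated_resultantZ_gleason (G := G) (h := 1) (u := 1) (r := 1) hd hk one_ne_zero
      isCoprime_one_left (by simp) (by rw [map_one, div_one]; exact hG ▸ hmem)
    simpa [Int.isUnit_iff] using this

/-- Let `d` be a prime, `m ≥ 2`, `n, k ≥ 1`. Then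
`Res(G_{d,m,n}, G_{d,0,k}) = ±d^{deg G_{d,0,n}}` if `n = k`, and `= ±1` if `n ≠ k`. -/
theorem resultant_misiurewicz_G0 (d m n k : ℕ) (hd : d.Prime) (hm : 2 ≤ m)
    (hn : 1 ≤ n) (hk : 1 ≤ k)
    (G G0n G0k : Polynomial ℤ) (hG : IsMisiurewicz d m n G)
    (hG0n : IsG0 d n G0n) (hG0k : IsG0 d k G0k) :
    (n = k →
      resultantZ G G0k = (d : ℤ) ^ G0n.natDegree ∨
        resultantZ G G0k = -(d : ℤ) ^ G0n.natDegree) ∧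
    (n ≠ k → resultantZ G G0k = 1 ∨ resultantZ G G0k = -1) := by
  exact resultant_misiurewicz_G0_general d m n k hd.two_le hm hn hk G G0n G0k hG hG0n hG0k
end
end
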